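/- arXiv:2207.03778 — 4 statements merged into one kernel-verified Lean document; each statement's English description precedes it below -/
import Mathlib

section
/- Let $K_1,\ldots,K_d \subset \mathbb{R}^d$ be compact connected sets. Suppose that there exist points $a_i, b_i \in K_i$ for $i = 1,\ldots,d$ such that the vectors $a_1 - b_1, \ldots, a_d - b_d$ are linearly independent. Then the arithmetic sum $K_1 + \cdots + K_d$ has non-empty interior. -/
open MeasureTheory Set Filter Topology

/-- A finite measure on position-velocity pairs representing a polygonal path from `a` to `b`
inside `U`. -/
def PathMeas {V : Type} [NormedAddCommGroup V] [NormedSpace ℝ V] [MeasurableSpace V]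
    (U : Set V) (a b : V) : Prop :=
  ∃ ν : Measure (V × V), IsFiniteMeasure ν ∧ (∀ᵐ z ∂ν, z.1 ∈ U) ∧
    Integrable (fun z : V × V => z.2) ν ∧
    (∀ l : V →L[ℝ] ℝ, ∫ z, Complex.exp (Complex.I * (l z.1 : ℂ)) * (Complex.I * (l z.2 : ℂ)) ∂ν =
      Complex.exp (Complex.I * (l b : ℂ)) - Complex.exp (Complex.I * (l a : ℂ))) ∧
    ∫ z, z.2 ∂ν = b - a

section
variable {V : Type} [NormedAddCommGroup V] [NormedSpace ℝ V] [MeasurableSpace V]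
  [BorelSpace V] [FiniteDimensional ℝ V] [SecondCountableTopology V]

lemma expI_bdd (l : V →L[ℝ] ℝ) (x : V) : ‖Complex.exp (Complex.I * (l x : ℂ))‖ ≤ 1 := by
  rw [mul_comm, Complex.norm_exp_ofReal_mul_I]

lemma expI_integrable {ν : Measure (V × V)} (h : Integrable (fun z : V × V => z.2) ν)
    (l m : V →L[ℝ] ℝ) :
    Integrable (fun z : V × V => Complex.exp (Complex.I * (l z.1 : ℂ)) * (m z.2 : ℂ)) ν := by
  refine Integrable.bdd_mul (c := 1) ((m.integrable_comp h).ofReal) ?_ ?_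
  · apply Continuous.aestronglyMeasurable
    fun_prop
  · exact Eventually.of_forall fun z => expI_bdd l z.1

lemma PathMeas.trans {U : Set V} {a b c : V} (h₁ : PathMeas U a b) (h₂ : PathMeas U b c) :
    PathMeas U a c := by
  obtain ⟨ν, f, hU, hi, he, hv⟩ := h₁
  obtain ⟨ν', f', hU', hi', he', hv'⟩ := h₂
  refine ⟨ν + ν', inferInstance, ?_, hi.add_measure hi', ?_, ?_⟩
  · rw [ae_add_measure_iff]; exact ⟨hU, hU'⟩
  · intro l
    rw [integral_add_measure, he, he']
    · ring
    · convert (expI_integrable hi l l).const_mul Complex.I using 2; ring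
    · convert (expI_integrable hi' l l).const_mul Complex.I using 2; ring
  · rw [integral_add_measure hi hi', hv, hv']; abel

lemma PathMeas.segment {U : Set V} {a b : V} (h : segment ℝ a b ⊆ U) : PathMeas U a b := by
  have hc : Continuous (fun t : ℝ => ((a + t • (b - a), b - a) : V × V)) := by fun_prop
  have hm := hc.measurable
  have key : ∀ {G : Type} [NormedAddCommGroup G] [NormedSpace ℝ G] (f : V × V → G),
      Continuous f → ∫ z, f z ∂((volume.restrict (Ioc (0:ℝ) 1)).map
        (fun t : ℝ => ((a + t • (b - a), b - a) : V × V))) =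
        ∫ t in (0:ℝ)..1, f (a + t • (b - a), b - a) := by
    intro G _ _ f hf
    rw [intervalIntegral.integral_of_le zero_le_one]
    by_cases hG : CompleteSpace G
    · rw [integral_map hm.aemeasurable]
      exact hf.aestronglyMeasurable
    · rw [integral, integral]; simp [hG]
  refine ⟨(volume.restrict (Ioc (0:ℝ) 1)).map (fun t : ℝ => (a + t • (b - a), b - a)),
    inferInstance, ?_, ?_, ?_, ?_⟩
  · have h0 : ∀ᵐ t ∂(volume.restrict (Ioc (0:ℝ) 1)), t ∈ Ioc (0:ℝ) 1 :=
      ae_restrict_mem measurableSet_Ioc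
    have hs : IsClosed (_root_.segment ℝ a b) := by
      rw [segment_eq_image]
      exact (isCompact_Icc.image (by fun_prop)).isClosed
    have : ∀ᵐ z ∂((volume.restrict (Ioc (0:ℝ) 1)).map
        (fun t : ℝ => ((a + t • (b - a), b - a) : V × V))), z.1 ∈ _root_.segment ℝ a b := by
      rw [ae_map_iff hm.aemeasurable (measurable_fst hs.measurableSet)]
      filter_upwards [h0] with t ht
      rw [segment_eq_image']
      exact ⟨t, ⟨ht.1.le, ht.2⟩, rfl⟩
    filter_upwards [this] with z hz using h hz
  · rw [integrable_map_measure continuous_snd.aestronglyMeasurable hm.aemeasurable]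
    exact integrable_const _
  · intro l
    rw [key _ (by fun_prop)]
    have hd : ∀ t : ℝ, HasDerivAt (fun t : ℝ => Complex.exp (Complex.I * (l (a + t • (b - a)) : ℂ)))
      (Complex.exp (Complex.I * (l (a + t • (b - a)) : ℂ)) * (Complex.I * (l (b - a) : ℂ))) t := by
      intro t
      have h1 : HasDerivAt (fun t : ℝ => l (a + t • (b - a))) (l (b - a)) t := by
        have := ((hasDerivAt_id t).mul_const (l (b - a))).const_add (l a)
        simpa using this
      exact (h1.ofReal_comp.const_mul Complex.I).cexp
    rw [intervalIntegral.integral_eq_sub_of_hasDerivAt (fun t _ => hd t)]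
    · simp
    · apply Continuous.intervalIntegrable; fun_prop
  · rw [key _ (by fun_prop)]
    simp

lemma PathMeas.of_connected {K : Set V} (hK : IsPreconnected K) {δ : ℝ} (hδ : 0 < δ) {a b : V}
    (ha : a ∈ K) (hb : b ∈ K) : PathMeas (Metric.thickening δ K) a b := by
  refine hK.induction₂' (PathMeas (Metric.thickening δ K)) ?_
    (fun x y z _ _ _ h h' => h.trans h') ha hb
  intro x hx
  have : ∀ᶠ y in 𝓝[K] x, y ∈ Metric.ball x δ :=
    nhdsWithin_le_nhds (Metric.ball_mem_nhds x hδ)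
  filter_upwards [this] with y hy
  have hs : Metric.ball x δ ⊆ Metric.thickening δ K := Metric.ball_subset_thickening hx δ
  have hx' := Metric.mem_ball_self hδ (x := x)
  exact ⟨.segment (((convex_ball x δ).segment_subset hx' hy).trans hs),
    .segment (((convex_ball x δ).segment_subset hy hx').trans hs)⟩
end

/-- The projection to the torus. -/
def toTorus (d : ℕ) : (Fin d → ℝ) →+ UnitAddTorus (Fin d) where
  toFun x := fun i => (x i : UnitAddCircle)
  map_zero' := by ext i; simp
  map_add' x y := by ext i; simp

lemma toTorus_continuous (d : ℕ) : Continuous (toTorus d) :=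
  continuous_pi fun i => (AddCircle.continuous_mk' 1).comp (continuous_apply i)

/-- The linear functional associated with a frequency vector. -/
noncomputable def freq {d : ℕ} (k : Fin d → ℤ) : (Fin d → ℝ) →L[ℝ] ℝ :=
  ∑ j, (2 * Real.pi * k j) • ContinuousLinearMap.proj j

lemma freq_apply {d : ℕ} (k : Fin d → ℤ) (x : Fin d → ℝ) :
    freq k x = ∑ j, 2 * Real.pi * k j * x j := by
  simp [freq]

lemma mFourier_toTorus {d : ℕ} (k : Fin d → ℤ) (x : Fin d → ℝ) :
    UnitAddTorus.mFourier k (toTorus d x) = Complex.exp (Complex.I * (freq k x : ℂ)) := by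
  simp only [UnitAddTorus.mFourier, toTorus, AddMonoidHom.coe_mk, ZeroHom.coe_mk,
    ContinuousMap.coe_mk, fourier_coe_apply, freq_apply]
  rw [← Complex.exp_sum, Complex.ofReal_sum, Finset.mul_sum]
  congr 1
  refine Finset.sum_congr rfl fun j _ => ?_
  push_cast
  ring

/-- Haar probability measure on the torus. -/
noncomputable def torusMeas (d : ℕ) : Measure (UnitAddTorus (Fin d)) :=
  Measure.pi (fun _ => (AddCircle.haarAddCircle : Measure UnitAddCircle))

instance (d : ℕ) : IsProbabilityMeasure (torusMeas d) := by unfold torusMeas; infer_instance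
instance (d : ℕ) : (torusMeas d).IsOpenPosMeasure := by unfold torusMeas; infer_instance

lemma integral_mFourier {d : ℕ} (k : Fin d → ℤ) (hk : k ≠ 0) :
    ∫ x, UnitAddTorus.mFourier k x ∂(torusMeas d) = 0 := by
  rw [UnitAddTorus.mFourier, ContinuousMap.coe_mk, torusMeas, integral_fintype_prod_eq_prod]
  obtain ⟨i, hi⟩ := Function.ne_iff.mp hk
  apply Finset.prod_eq_zero (Finset.mem_univ i)
  exact integral_eq_zero_of_add_right_eq_neg (μ := AddCircle.haarAddCircle)
      (fourier_add_half_inv_index hi one_pos)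

lemma integrable_aux {X T : Type} [MeasurableSpace X] [TopologicalSpace T] [CompactSpace T]
    [MeasurableSpace T] [BorelSpace T]
    (μ : Measure X) (g : X → T) (hg : Measurable g) (D : X → ℂ) (hD : Integrable D μ)
    (φ : C(T, ℂ)) : Integrable (fun x => φ (g x) * D x) μ := by
  refine hD.bdd_mul (c := ‖φ‖) ?_ (Eventually.of_forall fun x => φ.norm_coe_le_norm _)
  exact (φ.continuous.measurable.comp hg).aestronglyMeasurable

/-- Integration as a functional. -/
noncomputable def intFun {X T : Type} [MeasurableSpace X] [TopologicalSpace T] [CompactSpace T]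
    [MeasurableSpace T] [BorelSpace T]
    (μ : Measure X) (g : X → T) (hg : Measurable g) (D : X → ℂ) (hD : Integrable D μ) :
    C(T, ℂ) →L[ℂ] ℂ :=
  LinearMap.mkContinuous
    { toFun := fun φ => ∫ x, φ (g x) * D x ∂μ
      map_add' := fun φ ψ => by
        rw [← integral_add (integrable_aux μ g hg D hD φ) (integrable_aux μ g hg D hD ψ)]
        simp [add_mul]
      map_smul' := fun c φ => by
        rw [RingHom.id_apply, ← integral_smul]
        simp [mul_assoc] }
    (∫ x, ‖D x‖ ∂μ) (fun φ => by
      simp only [LinearMap.coe_mk, AddHom.coe_mk]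
      rw [mul_comm, ← integral_const_mul]
      refine norm_integral_le_of_norm_le (hD.norm.const_mul _) (Eventually.of_forall fun x => ?_)
      rw [norm_mul]
      gcongr
      exact φ.norm_coe_le_norm _)

lemma torus_dense {d : ℕ} (U : Fin d → Set (Fin d → ℝ)) (a b : Fin d → Fin d → ℝ)
    (hab : ∀ i, b i - a i = Pi.single i 1) (h : ∀ i, PathMeas (U i) (a i) (b i)) :
    Dense {y : UnitAddTorus (Fin d) | ∃ c : Fin d → Fin d → ℝ, (∀ i, c i ∈ U i) ∧
      toTorus d (∑ i, c i) = y} := by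
  choose ν hfin hU hi he hv using h
  let μ := Measure.pi ν
  let W : (Fin d → (Fin d → ℝ) × (Fin d → ℝ)) → Matrix (Fin d) (Fin d) ℂ :=
    fun z => Matrix.of fun j i => ((z i).2 j : ℂ)
  let D : (Fin d → (Fin d → ℝ) × (Fin d → ℝ)) → ℂ := fun z => (W z).det
  let g : (Fin d → (Fin d → ℝ) × (Fin d → ℝ)) → UnitAddTorus (Fin d) :=
    fun z => toTorus d (∑ i, (z i).1)
  have hg : Measurable g := by
    apply Continuous.measurable
    apply (toTorus_continuous d).comp
    fun_prop
  have hint : ∀ (k : Fin d → ℤ) (i j), Integrable (fun z : (Fin d → ℝ) × (Fin d → ℝ) =>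
      Complex.exp (Complex.I * (freq k z.1 : ℂ)) * (z.2 j : ℂ)) (ν i) := fun k i j =>
    expI_integrable (hi i) (freq k) (ContinuousLinearMap.proj j)
  have hexp : ∀ (k : Fin d → ℤ) z, UnitAddTorus.mFourier k (g z) * D z =
      ∑ σ : Equiv.Perm (Fin d), ((Equiv.Perm.sign σ : ℤ) : ℂ) *
        ∏ i, (Complex.exp (Complex.I * (freq k (z i).1 : ℂ)) * ((z i).2 (σ i) : ℂ)) := by
    intro k z
    simp only [g, D, mFourier_toTorus]
    rw [map_sum, Complex.ofReal_sum, Finset.mul_sum, Complex.exp_sum, Matrix.det_apply',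
      Finset.mul_sum]
    refine Finset.sum_congr rfl fun σ _ => ?_
    rw [Finset.prod_mul_distrib]
    simp only [W, Matrix.of_apply]
    ring
  have hprodint : ∀ (k : Fin d → ℤ) (σ : Equiv.Perm (Fin d)), Integrable
      (fun z : Fin d → (Fin d → ℝ) × (Fin d → ℝ) => ((Equiv.Perm.sign σ : ℤ) : ℂ) *
        ∏ i, (Complex.exp (Complex.I * (freq k (z i).1 : ℂ)) * ((z i).2 (σ i) : ℂ))) μ := by
    intro k σ
    apply Integrable.const_mul
    exact Integrable.fintype_prod (fun i => hint k i (σ i))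
  have hD : Integrable D μ := by
    have : D = fun z => ∑ σ : Equiv.Perm (Fin d), ((Equiv.Perm.sign σ : ℤ) : ℂ) *
        ∏ i, (Complex.exp (Complex.I * (freq 0 (z i).1 : ℂ)) * ((z i).2 (σ i) : ℂ)) := by
      ext z
      rw [← hexp 0 z, UnitAddTorus.mFourier_zero]
      simp
    rw [this]
    exact integrable_finsetSum _ fun σ _ => hprodint 0 σ
  let L := intFun μ g hg D hD
  let L' := intFun (torusMeas d) id measurable_id (fun _ => (1 : ℂ)) (integrable_const _)
  have hL : ∀ φ, L φ = ∫ z, φ (g z) * D z ∂μ := fun φ => rfl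
  have hL' : ∀ φ, L' φ = ∫ z, φ z ∂(torusMeas d) := fun φ => by
    change ∫ z, φ z * 1 ∂(torusMeas d) = _
    simp
  have hdet : ∀ k, L (UnitAddTorus.mFourier k) = (Matrix.of fun j i =>
      ∫ z, Complex.exp (Complex.I * (freq k z.1 : ℂ)) * (z.2 j : ℂ) ∂(ν i)).det := by
    intro k
    rw [hL, Matrix.det_apply']
    simp_rw [hexp k]
    rw [integral_finsetSum _ fun σ _ => hprodint k σ]
    refine Finset.sum_congr rfl fun σ _ => ?_
    rw [integral_const_mul]
    congr 1
    exact integral_fintype_prod_eq_prod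
      (fun i (z : (Fin d → ℝ) × (Fin d → ℝ)) =>
        Complex.exp (Complex.I * (freq k z.1 : ℂ)) * (z.2 (σ i) : ℂ))
  have hagree : ∀ k, L (UnitAddTorus.mFourier k) = L' (UnitAddTorus.mFourier k) := by
    intro k
    by_cases hk : k = 0
    · subst hk
      rw [hdet, hL', UnitAddTorus.mFourier_zero]
      have : (Matrix.of fun j i => ∫ z, Complex.exp (Complex.I * (freq 0 z.1 : ℂ)) *
          (z.2 j : ℂ) ∂(ν i)) = (1 : Matrix (Fin d) (Fin d) ℂ) := by
        ext j i
        have h1 : ∫ z, z.2 j ∂(ν i) = (b i - a i) j := by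
          rw [← hv i]
          exact (ContinuousLinearMap.proj (R := ℝ) (φ := fun _ : Fin d => ℝ) j).integral_comp_comm
            (hi i)
        have h0 : ∀ x, freq (0 : Fin d → ℤ) x = 0 := fun x => by simp [freq_apply]
        simp only [Matrix.of_apply, h0, Complex.ofReal_zero, mul_zero, Complex.exp_zero, one_mul]
        rw [integral_complex_ofReal, h1, hab, Matrix.one_apply, Pi.single_apply]
        split_ifs <;> simp
      rw [this]
      simp
    · rw [hdet, hL', integral_mFourier k hk]
      rw [← Matrix.exists_vecMul_eq_zero_iff]
      refine ⟨fun j => (k j : ℂ), ?_, ?_⟩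
      · obtain ⟨i, hi⟩ := Function.ne_iff.mp hk
        exact Function.ne_iff.mpr ⟨i, by simpa using hi⟩
      · ext i
        simp only [Matrix.vecMul, dotProduct, Matrix.of_apply, Pi.zero_apply]
        simp_rw [← integral_const_mul]
        rw [← integral_finsetSum _ fun j _ => (hint k i j).const_mul _]
        have h2 := he i (freq k)
        have h3 : Complex.exp (Complex.I * (freq k (b i) : ℂ)) =
            Complex.exp (Complex.I * (freq k (a i) : ℂ)) := by
          have : b i = a i + Pi.single i 1 := by rw [← hab i]; abel
          rw [this, map_add]
          have h4 : freq k (Pi.single i 1) = k i * (2 * Real.pi) := by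
            rw [freq_apply, Finset.sum_eq_single i]
            · simp; ring
            · intro j _ hj; simp [hj]
            · simp
          rw [h4, Complex.exp_eq_exp_iff_exists_int]
          exact ⟨k i, by push_cast; ring⟩
        rw [h3, sub_self] at h2
        have h5 : ∀ z : (Fin d → ℝ) × (Fin d → ℝ),
            Complex.exp (Complex.I * (freq k z.1 : ℂ)) * (Complex.I * (freq k z.2 : ℂ)) =
            (2 * Real.pi * Complex.I) * ∑ j, (k j : ℂ) *
              (Complex.exp (Complex.I * (freq k z.1 : ℂ)) * (z.2 j : ℂ)) := by
          intro z
          rw [freq_apply k z.2]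
          push_cast
          simp only [Finset.mul_sum]
          refine Finset.sum_congr rfl fun j _ => ?_
          ring
        simp_rw [h5] at h2
        rw [integral_const_mul] at h2
        exact (mul_eq_zero.mp h2).resolve_left Complex.two_pi_I_ne_zero
  have hLL : L = L' := by
    refine ContinuousLinearMap.ext_on (s := range (UnitAddTorus.mFourier (d := Fin d))) ?_ ?_
    · rw [Submodule.dense_iff_topologicalClosure_eq_top]
      exact UnitAddTorus.span_mFourier_closure_eq_top
    · rintro _ ⟨k, rfl⟩
      exact hagree k
  intro y
  by_contra hy
  obtain ⟨f, hf0, hf1, hf⟩ := exists_continuous_zero_one_of_isClosed isClosed_closure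
    (isClosed_singleton (x := y)) (disjoint_singleton_right.mpr hy)
  let φ : C(UnitAddTorus (Fin d), ℂ) := ⟨fun x => (f x : ℂ), by fun_prop⟩
  have h1 : L φ = 0 := by
    rw [hL]
    apply integral_eq_zero_of_ae
    have : ∀ᵐ z ∂μ, ∀ i, (z i).1 ∈ U i := by
      rw [ae_all_iff]
      intro i
      exact (Measure.quasiMeasurePreserving_eval ν i).ae (hU i)
    filter_upwards [this] with z hz
    have : f (g z) = 0 := hf0 (subset_closure ⟨fun i => (z i).1, hz, rfl⟩)
    simp [φ, this]
  have h2 : 0 < ∫ x, f x ∂(torusMeas d) := by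
    refine f.continuous.integral_pos_of_hasCompactSupport_nonneg_nonzero (x := y)
      (HasCompactSupport.of_compactSpace _) (fun x => (hf x).1) ?_
    rw [hf1 rfl]; simp
  rw [hLL, hL'] at h1
  change ∫ x, (f x : ℂ) ∂(torusMeas d) = 0 at h1
  rw [integral_complex_ofReal] at h1
  exact h2.ne' (by exact_mod_cast h1)

lemma sum_interior {d : ℕ} (K : Fin d → Set (Fin d → ℝ))
    (hcpt : ∀ i, IsCompact (K i)) (hconn : ∀ i, IsPreconnected (K i))
    (a b : Fin d → Fin d → ℝ) (ha : ∀ i, a i ∈ K i) (hb : ∀ i, b i ∈ K i)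
    (hab : ∀ i, b i - a i = Pi.single i 1) :
    (interior {x : Fin d → ℝ |
      ∃ c : Fin d → Fin d → ℝ, (∀ i, c i ∈ K i) ∧ x = ∑ i, c i}).Nonempty := by
  set S := {x : Fin d → ℝ | ∃ c : Fin d → Fin d → ℝ, (∀ i, c i ∈ K i) ∧ x = ∑ i, c i} with hS
  have hScpt : IsCompact S := by
    have : S = (fun c : Fin d → Fin d → ℝ => ∑ i, c i) '' (Set.univ.pi K) := by
      ext x
      simp only [hS, mem_setOf_eq, mem_image, mem_univ_pi]
      exact ⟨fun ⟨c, h, h'⟩ => ⟨c, h, h'.symm⟩, fun ⟨c, h, h'⟩ => ⟨c, h, h'.symm⟩⟩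
    rw [this]
    exact (isCompact_univ_pi hcpt).image (by fun_prop)
  have hcl : IsClosed (toTorus d '' S) := (hScpt.image (toTorus_continuous d)).isClosed
  have huniv : toTorus d '' S = univ := by
    by_contra hne
    obtain ⟨y, hy⟩ := (ne_univ_iff_exists_notMem _).mp hne
    obtain ⟨ε, hε, hball⟩ := Metric.isOpen_iff.mp hcl.isOpen_compl y hy
    have huc := uniformContinuous_addMonoidHom_of_continuous (toTorus_continuous d)
    obtain ⟨η, hη, hηε⟩ := Metric.uniformContinuous_iff.mp huc (ε / 2) (half_pos hε)
    have hδ : 0 < η / (d + 1) := by positivity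
    have hd := torus_dense (fun i => Metric.thickening (η / (d + 1)) (K i)) a b hab
      (fun i => PathMeas.of_connected (hconn i) hδ (ha i) (hb i))
    obtain ⟨_, ⟨c, hc, rfl⟩, hcy⟩ := hd.exists_dist_lt y (half_pos hε)
    simp only [Metric.mem_thickening_iff] at hc
    choose e heK hed using hc
    have h1 : dist (∑ i, c i) (∑ i, e i) < η := by
      calc dist (∑ i, c i) (∑ i, e i) ≤ ∑ i, dist (c i) (e i) := dist_sum_sum_le _ _ _
        _ ≤ ∑ _i : Fin d, η / (d + 1) := Finset.sum_le_sum fun i _ => (hed i).le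
        _ = d * (η / (d + 1)) := by simp
        _ < (d + 1) * (η / (d + 1)) := by gcongr; linarith
        _ = η := by field_simp
    have h2 := hηε h1
    have h3 : toTorus d (∑ i, e i) ∈ Metric.ball y ε := by
      rw [Metric.mem_ball, dist_comm]
      calc _ ≤ _ := dist_triangle _ (toTorus d (∑ i, c i)) _
        _ < ε / 2 + ε / 2 := add_lt_add hcy h2
        _ = ε := by ring
    exact hball h3 ⟨_, ⟨e, heK, rfl⟩, rfl⟩
  have hbaire := nonempty_interior_of_iUnion_of_closed
    (f := fun n : Fin d → ℤ => (Homeomorph.addRight (fun i => (n i : ℝ))) '' S)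
    (fun n => ((Homeomorph.addRight (fun i => (n i : ℝ))).isClosed_image).mpr hScpt.isClosed) (by
      rw [eq_univ_iff_forall]
      intro x
      obtain ⟨s, hs, hsx⟩ := (huniv ▸ mem_univ (toTorus d x) : toTorus d x ∈ toTorus d '' S)
      have : ∀ i, ∃ n : ℤ, (n : ℝ) = x i - s i := by
        intro i
        have h1 : ((s i : ℝ) : UnitAddCircle) = (x i : ℝ) := congrFun hsx i
        have h2 : ((x i - s i : ℝ) : UnitAddCircle) = 0 := by
          rw [AddCircle.coe_sub, h1, sub_self]
        obtain ⟨n, hn⟩ := (AddCircle.coe_eq_zero_iff 1).mp h2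
        exact ⟨n, by simpa using hn⟩
      choose n hn using this
      refine mem_iUnion.mpr ⟨n, s, hs, ?_⟩
      ext i
      simp [hn i])
  obtain ⟨n, hn⟩ := hbaire
  rw [← Homeomorph.image_interior] at hn
  exact hn.of_image

/-- **Theorem (Banakh–Jabłońska–Jabłoński).**
Let `K 1, …, K d ⊂ ℝ^d` be compact connected sets. Suppose that there exist points
`a i, b i ∈ K i` such that the vectors `a 1 - b 1, …, a d - b d` are linearly independent.
Then the arithmetic sum `K 1 + ⋯ + K d` has non-empty interior. -/
theorem sum_of_compact_connected_has_nonempty_interior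
    (d : ℕ) (K : Fin d → Set (EuclideanSpace ℝ (Fin d)))
    (hcpt : ∀ i, IsCompact (K i)) (hconn : ∀ i, IsConnected (K i))
    (a b : Fin d → EuclideanSpace ℝ (Fin d))
    (ha : ∀ i, a i ∈ K i) (hb : ∀ i, b i ∈ K i)
    (hli : LinearIndependent ℝ (fun i => a i - b i)) :
    (interior {x : EuclideanSpace ℝ (Fin d) |
      ∃ c : Fin d → EuclideanSpace ℝ (Fin d), (∀ i, c i ∈ K i) ∧ x = ∑ i, c i}).Nonempty := by
  let B := basisOfLinearIndependentOfCardEqFinrank' _ hli (by simp)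
  have hB : ∀ i, B i = a i - b i := fun i => by simp [B]
  let e : EuclideanSpace ℝ (Fin d) ≃L[ℝ] (Fin d → ℝ) := B.equivFun.toContinuousLinearEquiv
  have he : ∀ i, e (a i) - e (b i) = Pi.single i 1 := by
    intro i
    rw [← map_sub, ← hB]
    ext j
    simp [e, Finsupp.single_apply, Pi.single_apply, eq_comm]
  have key := sum_interior (fun i => e '' K i) (fun i => (hcpt i).image e.continuous)
    (fun i => (hconn i).isPreconnected.image e e.continuous.continuousOn)
    (fun i => e (b i)) (fun i => e (a i)) (fun i => mem_image_of_mem e (hb i))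
    (fun i => mem_image_of_mem e (ha i)) he
  have hset : {x : Fin d → ℝ | ∃ c : Fin d → Fin d → ℝ, (∀ i, c i ∈ e '' K i) ∧ x = ∑ i, c i} =
      e.toHomeomorph '' {x : EuclideanSpace ℝ (Fin d) |
      ∃ c : Fin d → EuclideanSpace ℝ (Fin d), (∀ i, c i ∈ K i) ∧ x = ∑ i, c i} := by
    ext x
    constructor
    · rintro ⟨c, hc, rfl⟩
      choose c' hc' hcc using hc
      refine ⟨∑ i, c' i, ⟨c', hc', rfl⟩, ?_⟩
      change e _ = _
      rw [map_sum]
      simp [hcc]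
    · rintro ⟨_, ⟨c, hc, rfl⟩, rfl⟩
      refine ⟨fun i => e (c i), fun i => mem_image_of_mem e (hc i), ?_⟩
      change e _ = _
      rw [map_sum]
  rw [hset, ← Homeomorph.image_interior] at key
  exact key.of_image
end

section
/- Let $E, F \subset \mathbb{R}^2$ be connected sets each with cardinality greater than $1$. If $F$ is compact and $F$ is not a line segment (i.e., $F$ is not of the form $\{(1-t)a + tb : t \in [0,1]\}$ for points $a, b \in \mathbb{R}^2$), then the arithmetic sum $E + F = \{x + y : x \in E, y \in F\}$ has non-empty interior. -/
open Pointwise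

lemma angle_trap {φ : ℝ → ℝ} (hφ : Continuous φ) (c a b : ℝ)
    (hs : ∀ t, 0 < Real.sin (φ t - c)) (h0 : 0 < φ a - c) (h1 : φ a - c < Real.pi) :
    0 < φ b - c ∧ φ b - c < Real.pi := by
  have hc : Continuous (fun t => φ t - c) := by fun_prop
  constructor
  · by_contra h
    push Not at h
    obtain ⟨t, ht⟩ := mem_range_of_exists_le_of_exists_ge hc ⟨b, h⟩ ⟨a, h0.le⟩
    have := hs t
    simp only at ht
    rw [ht] at this
    simp at this
  · by_contra h
    push Not at h
    obtain ⟨t, ht⟩ := mem_range_of_exists_le_of_exists_ge hc ⟨a, h1.le⟩ ⟨b, h⟩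
    have := hs t
    simp only at ht
    rw [ht] at this
    simp at this

/-- Planar nonvanishing maps with the Poincare-Miranda sign pattern do not exist. -/
lemma no_miranda (g : ℝ × ℝ → ℂ) (hg : Continuous g) (h0 : ∀ p, g p ≠ 0)
    (hl : ∀ t, (g (0, t)).re < 0) (hr : ∀ t, 0 < (g (1, t)).re)
    (hb : ∀ s, 0 < (g (s, 0)).im) (ht : ∀ s, (g (s, 1)).im < 0) : False := by
  have hsc : IsSimplyConnected (Set.univ : Set (ℝ × ℝ)) := by
    have := (convex_univ (𝕜 := ℝ) (E := ℝ × ℝ)).contractibleSpace Set.univ_nonempty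
    exact (inferInstance : SimplyConnectedSpace (Set.univ : Set (ℝ × ℝ)))
  obtain ⟨F, hF, hFe⟩ := Complex.exists_continuousOn_eqOn_exp_comp hsc isOpen_univ
    hg.continuousOn (by rintro ⟨p, -, hp⟩; exact h0 p hp)
  have hFc : Continuous F := continuousOn_univ.1 hF
  have hFe' : ∀ p, Complex.exp (F p) = g p := fun p => hFe (Set.mem_univ p)
  set k : ℤ := ⌊(F (0, 0)).im / (2 * Real.pi)⌋ with hk
  set θ : ℝ × ℝ → ℝ := fun p => (F p).im - k * (2 * Real.pi) with hθ
  have hθc : Continuous θ := by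
    have := Complex.continuous_im.comp hFc
    simp only [hθ]
    exact this.sub continuous_const
  have hre : ∀ p, (g p).re = Real.exp (F p).re * Real.cos (θ p) := by
    intro p
    rw [← hFe' p, Complex.exp_re]
    simp only [hθ, Real.cos_sub_int_mul_two_pi]
  have him : ∀ p, (g p).im = Real.exp (F p).re * Real.sin (θ p) := by
    intro p
    rw [← hFe' p, Complex.exp_im]
    simp only [hθ, Real.sin_sub_int_mul_two_pi]
  have hl' : ∀ t, Real.cos (θ (0, t)) < 0 := fun t => by
    have := hl t; rw [hre] at this
    exact (pos_iff_neg_of_mul_neg this).1 (Real.exp_pos _)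
  have ht' : ∀ s, Real.sin (θ (s, 1)) < 0 := fun t => by
    have := ht t; rw [him] at this
    exact (pos_iff_neg_of_mul_neg this).1 (Real.exp_pos _)
  have hr' : ∀ t, 0 < Real.cos (θ (1, t)) := fun t => by
    have := hr t; rw [hre] at this
    exact (pos_iff_pos_of_mul_pos this).1 (Real.exp_pos _)
  have hb' : ∀ s, 0 < Real.sin (θ (s, 0)) := fun t => by
    have := hb t; rw [him] at this
    exact (pos_iff_pos_of_mul_pos this).1 (Real.exp_pos _)
  have hpi := Real.pi_pos
  have a0 : 0 ≤ θ (0, 0) := by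
    have := Int.floor_le ((F (0, 0)).im / (2 * Real.pi))
    rw [← hk, le_div_iff₀ (by positivity)] at this
    simp only [hθ]; linarith
  have a1 : θ (0, 0) < 2 * Real.pi := by
    have := Int.lt_floor_add_one ((F (0, 0)).im / (2 * Real.pi))
    rw [← hk, div_lt_iff₀ (by positivity)] at this
    simp only [hθ]; linarith
  have a2 : θ (0, 0) < Real.pi := by
    by_contra h
    push Not at h
    have h1 := hb' 0
    have : 0 ≤ Real.sin (θ (0, 0) - Real.pi) :=
      Real.sin_nonneg_of_nonneg_of_le_pi (by linarith) (by linarith)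
    rw [Real.sin_sub_pi] at this
    linarith
  have a3 : Real.pi / 2 < θ (0, 0) := by
    by_contra h
    push Not at h
    have h1 := hl' 0
    have := Real.cos_nonneg_of_neg_pi_div_two_le_of_le (by linarith) h
    linarith
  -- bottom side
  have b1 := angle_trap (φ := fun s => θ (s, 0)) (by fun_prop) 0 0 1
    (by simpa using hb') (by linarith) (by linarith)
  simp only [sub_zero] at b1
  -- left side
  have b2 := angle_trap (φ := fun t => θ (0, t)) (by fun_prop) (Real.pi / 2) 0 1
    (by intro t; rw [Real.sin_sub_pi_div_two]; linarith [hl' t])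
    (by linarith) (by linarith)
  have c2 : Real.pi < θ (0, 1) := by
    by_contra h
    push Not at h
    have h1 := ht' 0
    have := Real.sin_nonneg_of_nonneg_of_le_pi (x := θ (0, 1)) (by linarith) h
    linarith
  -- top side
  have b3 := angle_trap (φ := fun s => θ (s, 1)) (by fun_prop) (Real.pi) 0 1
    (by intro t; rw [Real.sin_sub_pi]; linarith [ht' t])
    (by linarith) (by linarith)
  have c3 : 3 * Real.pi / 2 < θ (1, 1) := by
    by_contra h
    push Not at h
    have h1 := hr' 1
    have := Real.cos_nonneg_of_neg_pi_div_two_le_of_le (x := θ (1, 1) - Real.pi)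
      (by linarith) (by linarith)
    rw [Real.cos_sub_pi] at this
    linarith
  -- right side
  have b4 := angle_trap (φ := fun t => θ (1, t)) (by fun_prop) (3 * Real.pi / 2) 1 0
    (by
      intro t
      have : θ (1, t) - 3 * Real.pi / 2 = (θ (1, t) - Real.pi) - Real.pi / 2 := by ring
      rw [this, Real.sin_sub_pi_div_two, Real.cos_sub_pi]; linarith [hr' t])
    (by linarith) (by linarith)
  linarith [b1.2, b4.1]

section
variable {V : Type*} [NormedAddCommGroup V] [NormedSpace ℝ V]

lemma joinedIn_of_connected {U S : Set V} (hU : IsOpen U) (hS : IsPreconnected S)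
    (hSU : S ⊆ U) {x y : V} (hx : x ∈ S) (hy : y ∈ S) : JoinedIn U x y := by
  have h1 : IsOpen (connectedComponentIn U x) := hU.connectedComponentIn
  have h2 : IsConnected (connectedComponentIn U x) :=
    isConnected_connectedComponentIn_iff.2 (hSU hx)
  have h3 := h1.isConnected_iff_isPathConnected.1 h2
  have h4 := hS.subset_connectedComponentIn hx hSU
  exact (h3.joinedIn x (h4 hx) y (h4 hy)).mono (connectedComponentIn_subset U x)

/-- Crossing lemma. -/
lemma crossing (f g : V →L[ℝ] ℝ) (hinj : ∀ x, f x = 0 → g x = 0 → x = 0)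
    {A B : Set V} (hA : IsPreconnected A) (hB : IsPreconnected B) (hBc : IsClosed B)
    {a0 a1 b0 b1 : V} (ha0 : a0 ∈ A) (ha1 : a1 ∈ A) (hb0 : b0 ∈ B) (hb1 : b1 ∈ B)
    (hf0 : ∀ b ∈ B, f a0 < f b) (hf1 : ∀ b ∈ B, f b < f a1)
    (hg0 : ∀ a ∈ A, g b0 < g a) (hg1 : ∀ a ∈ A, g a < g b1) : (A ∩ B).Nonempty := by
  by_contra hne
  rw [Set.not_nonempty_iff_eq_empty] at hne
  have hAU : A ⊆ Bᶜ ∩ {x | g b0 < g x} ∩ {x | g x < g b1} := by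
    intro a ha
    refine ⟨⟨fun hb => ?_, hg0 a ha⟩, hg1 a ha⟩
    have : a ∈ A ∩ B := ⟨ha, hb⟩
    rw [hne] at this; exact this
  obtain ⟨α, hα⟩ := joinedIn_of_connected
    ((hBc.isOpen_compl.inter (isOpen_lt continuous_const g.continuous)).inter
      (isOpen_lt g.continuous continuous_const)) hA hAU ha0 ha1
  have hrc : IsClosed (Set.range α) := (isCompact_range α.continuous).isClosed
  have hBU : B ⊆ (Set.range α)ᶜ ∩ {x | f a0 < f x} ∩ {x | f x < f a1} := by
    intro b hb
    refine ⟨⟨?_, hf0 b hb⟩, hf1 b hb⟩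
    rintro ⟨t, rfl⟩
    exact (hα t).1.1 hb
  obtain ⟨β, hβ⟩ := joinedIn_of_connected
    ((hrc.isOpen_compl.inter (isOpen_lt continuous_const f.continuous)).inter
      (isOpen_lt f.continuous continuous_const)) hB hBU hb0 hb1
  have hαe : ∀ s, α.extend s ∈ Set.range α := fun s => by
    rw [← α.extend_range]; exact ⟨s, rfl⟩
  have hβe : ∀ s, β.extend s ∈ Set.range β := fun s => by
    rw [← β.extend_range]; exact ⟨s, rfl⟩
  have hα' : ∀ s, g b0 < g (α.extend s) ∧ g (α.extend s) < g b1 := by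
    intro s; obtain ⟨t, ht⟩ := hαe s
    rw [← ht]; exact ⟨(hα t).1.2, (hα t).2⟩
  have hβ' : ∀ s, f a0 < f (β.extend s) ∧ f (β.extend s) < f a1 := by
    intro s; obtain ⟨t, ht⟩ := hβe s
    rw [← ht]; exact ⟨(hβ t).1.2, (hβ t).2⟩
  have ca := α.continuous_extend
  have cb := β.continuous_extend
  refine no_miranda (fun p => ((f (α.extend p.1 - β.extend p.2) : ℝ) : ℂ) +
    ((g (α.extend p.1 - β.extend p.2) : ℝ) : ℂ) * Complex.I) ?_ ?_ ?_ ?_ ?_ ?_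
  · fun_prop
  · rintro ⟨s, t⟩ h
    have hr := congrArg Complex.re h
    have hi := congrArg Complex.im h
    simp only [Complex.add_re, Complex.ofReal_re, Complex.mul_re, Complex.I_re, mul_zero,
      Complex.ofReal_im, Complex.I_im, mul_one, sub_self, add_zero, Complex.zero_re,
      Complex.add_im, Complex.mul_im, zero_add, Complex.zero_im] at hr hi
    have h0 := hinj _ hr hi
    rw [sub_eq_zero] at h0
    obtain ⟨u, hu⟩ := hβe t
    have := (hβ u).1.1
    apply this
    rw [hu, ← h0]; exact hαe s
  · intro t; simpa using (hβ' t).1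
  · intro t; simpa using (hβ' t).2
  · intro t; simpa using (hα' t).1
  · intro t; simpa using (hα' t).2

lemma chain_connected {K : Set V} (hK : IsConnected K) (w : ℤ → V)
    (hw : ∀ i, w (i + 1) - w i ∈ K - K) (n : ℤ) :
    IsPreconnected (⋃ i ∈ Set.Icc (-n) n, (fun k => w i + k) '' K) := by
  refine IsPreconnected.biUnion_of_chain Set.ordConnected_Icc ?_ ?_
  · intro i _
    exact (hK.image _ (by fun_prop)).isPreconnected
  · intro i _ _
    obtain ⟨k, hk, k', hk', h⟩ := Set.mem_sub.1 (hw i)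
    refine ⟨w i + k, ⟨k, hk, rfl⟩, ⟨k', hk', ?_⟩⟩
    have : w (i + 1) = w i + (k - k') := by rw [h]; abel
    simp only [Order.succ_eq_add_one]
    rw [this]; abel

lemma chain_closed {K : Set V} (hK : IsCompact K) (w : ℤ → V) (n : ℤ) :
    IsClosed (⋃ i ∈ Set.Icc (-n) n, (fun k => w i + k) '' K) :=
  (Set.finite_Icc (-n) n).isClosed_biUnion fun i _ => (hK.image (by fun_prop)).isClosed

/-- For a compact connected set containing an affine frame, `K - K` has interior. -/
lemma diff_interior [CompleteSpace V] {K : Set V} (hK : IsConnected K) (hKc : IsCompact K)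
    (f g : V →L[ℝ] ℝ) (hinj : ∀ x, f x = 0 → g x = 0 → x = 0)
    {a b c : V} (ha : a ∈ K) (hb : b ∈ K) (hc : c ∈ K)
    (h1 : f (b - a) = 1) (h2 : g (b - a) = 0) (h3 : f (c - a) = 0) (h4 : g (c - a) = 1) :
    (interior (K - K)).Nonempty := by
  set v := b - a with hv
  set w := c - a with hw
  have hDc : IsCompact (K - K) := by
    rw [sub_eq_add_neg]; exact hKc.add hKc.neg
  obtain ⟨C1, hC1⟩ := hKc.exists_bound_of_continuousOn f.continuous.continuousOn
  obtain ⟨C2, hC2⟩ := hKc.exists_bound_of_continuousOn g.continuous.continuousOn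
  simp only [Real.norm_eq_abs] at hC1 hC2
  have hcov : (⋃ p : ℤ × ℤ, (fun x => ((p.1 : ℝ) • v - (p.2 : ℝ) • w) + x) '' (K - K))
      = Set.univ := by
    rw [Set.eq_univ_iff_forall]
    intro z
    obtain ⟨n, hn⟩ := exists_nat_gt (2 * C1 + 2 * C2 + |f z| + |g z|)
    have hC1' : 0 ≤ C1 := (abs_nonneg _).trans (hC1 a ha)
    have hC2' : 0 ≤ C2 := (abs_nonneg _).trans (hC2 a ha)
    have z1 := abs_le.1 (le_refl |f z|)
    have z2 := abs_le.1 (le_refl |g z|)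
    have z3 := abs_nonneg (f z)
    have z4 := abs_nonneg (g z)
    have a1 := abs_le.1 (hC1 a ha)
    have a2 := abs_le.1 (hC2 a ha)
    have key := crossing f g hinj
      (chain_connected hK (fun i => (i : ℝ) • v) (fun i => ⟨b, hb, a, ha, by
        simp only [← hv]; push_cast; module⟩) n)
      (chain_connected hK (fun i => z + (i : ℝ) • w) (fun i => ⟨c, hc, a, ha, by
        simp only [← hw]; push_cast; module⟩) n)
      (chain_closed hKc _ n)
      (a0 := ((-n : ℤ) : ℝ) • v + a) (a1 := ((n : ℤ) : ℝ) • v + a)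
      (b0 := (z + ((-n : ℤ) : ℝ) • w) + a) (b1 := (z + ((n : ℤ) : ℝ) • w) + a)
      (Set.mem_biUnion (x := -(n : ℤ)) (by simp) ⟨a, ha, rfl⟩)
      (Set.mem_biUnion (x := (n : ℤ)) (by simp) ⟨a, ha, rfl⟩)
      (Set.mem_biUnion (x := -(n : ℤ)) (by simp) ⟨a, ha, rfl⟩)
      (Set.mem_biUnion (x := (n : ℤ)) (by simp) ⟨a, ha, rfl⟩)
      ?_ ?_ ?_ ?_
    · obtain ⟨x, hxP, hxQ⟩ := key
      simp only [Set.mem_iUnion, Set.mem_image] at hxP hxQ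
      obtain ⟨i, -, k, hk, rfl⟩ := hxP
      obtain ⟨j, -, k', hk', h⟩ := hxQ
      refine Set.mem_iUnion.2 ⟨(i, j), k - k', Set.sub_mem_sub hk hk', ?_⟩
      simp only
      have : z = (i : ℝ) • v + k - (j : ℝ) • w - k' := by rw [← h]; abel
      rw [this]; abel
    all_goals
      intro y hy
      simp only [Set.mem_iUnion, Set.mem_image] at hy
      obtain ⟨i, -, k, hk, rfl⟩ := hy
      have k1 := abs_le.1 (hC1 k hk)
      have k2 := abs_le.1 (hC2 k hk)
      simp only [map_add, map_smul, h1, h2, h3, h4, smul_eq_mul]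
      push_cast
      linarith
  obtain ⟨p, hp⟩ := nonempty_interior_of_iUnion_of_closed
    (fun p : ℤ × ℤ => (hDc.image (f := fun x => ((p.1 : ℝ) • v - (p.2 : ℝ) • w) + x)
      (by fun_prop)).isClosed) hcov
  have := (Homeomorph.addLeft ((p.1 : ℝ) • v - (p.2 : ℝ) • w)).image_interior (K - K)
  simp only [Homeomorph.coe_addLeft] at this
  rw [← this] at hp
  exact Set.image_nonempty.1 hp

lemma chain_block (f g : V →L[ℝ] ℝ) (hinj : ∀ x, f x = 0 → g x = 0 → x = 0)
    {K A : Set V} (hK : IsConnected K) (hKc : IsCompact K) (hA : IsPreconnected A)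
    {e a : V} (he : e ∈ A) (ha : a ∈ A) (w : ℤ → V) (hw : ∀ i, w (i + 1) - w i ∈ K - K)
    (C h R : ℝ) (n : ℤ) (hn0 : 0 ≤ n)
    (hwf : ∀ i, ∀ k ∈ K, |f (w i + k - e) - i| ≤ C)
    (hwg : ∀ i, ∀ k ∈ K, |g (w i + k - e) - h| ≤ C)
    (hC : C < h) (hR : h + C < R) (hn : R + C < n)
    (hAf : ∀ x ∈ A, |f (x - e)| ≤ R) (hag : R ≤ g (a - e)) :
    (A ∩ ⋃ i ∈ Set.Icc (-n) n, (fun k => w i + k) '' K).Nonempty := by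
  obtain ⟨k0, hk0⟩ := hK.nonempty
  refine crossing g f (fun x hx hy => hinj x hy hx) hA (chain_connected hK w hw n)
    (chain_closed hKc w n) he ha
    (b0 := w (-n) + k0) (b1 := w n + k0)
    (Set.mem_biUnion (x := -n) (by simp [hn0]) ⟨k0, hk0, rfl⟩)
    (Set.mem_biUnion (x := n) (by simp [hn0]) ⟨k0, hk0, rfl⟩) ?_ ?_ ?_ ?_
  · intro y hy
    simp only [Set.mem_iUnion, Set.mem_image] at hy
    obtain ⟨i, -, k, hk, rfl⟩ := hy
    have := abs_le.1 (hwg i k hk)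
    rw [map_sub] at this
    linarith
  · intro y hy
    simp only [Set.mem_iUnion, Set.mem_image] at hy
    obtain ⟨i, -, k, hk, rfl⟩ := hy
    have := abs_le.1 (hwg i k hk)
    rw [map_sub] at this hag
    linarith
  · intro y hy
    have h1 := abs_le.1 (hAf y hy)
    have h2 := abs_le.1 (hwf (-n) k0 hk0)
    rw [map_sub] at h1 h2
    push_cast at h2
    linarith
  · intro y hy
    have h1 := abs_le.1 (hAf y hy)
    have h2 := abs_le.1 (hwf n k0 hk0)
    rw [map_sub] at h1 h2
    linarith

/-- The index set of the ring. -/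
def ringIdx (n h : ℤ) : Set (ℤ × ℤ) :=
  {p | (-n ≤ p.1 ∧ p.1 ≤ n) ∧ (-n ≤ p.2 ∧ p.2 ≤ n) ∧
    (p.1 = h ∨ p.1 = -h ∨ p.2 = h ∨ p.2 = -h)}

lemma mem_ringIdx {n h i j : ℤ} : (i, j) ∈ ringIdx n h ↔
    (-n ≤ i ∧ i ≤ n) ∧ (-n ≤ j ∧ j ≤ n) ∧ (i = h ∨ i = -h ∨ j = h ∨ j = -h) := Iff.rfl

/-- The ring built from translates of `K`. -/
def ringSet (K : Set V) (z : ℤ × ℤ → V) (n h : ℤ) : Set V :=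
  ⋃ p ∈ ringIdx n h, (fun k => z p + k) '' K

lemma ringSet_closed {K : Set V} (hK : IsCompact K) (z : ℤ × ℤ → V) (n h : ℤ) :
    IsClosed (ringSet K z n h) := by
  refine Set.Finite.isClosed_biUnion ?_ fun i _ => (hK.image (by fun_prop)).isClosed
  refine ((Set.finite_Icc (-n) n).prod (Set.finite_Icc (-n) n)).subset ?_
  intro p hp
  exact ⟨hp.1, hp.2.1⟩

lemma mem_ringSet {K : Set V} {z : ℤ × ℤ → V} {n h : ℤ} {x : V} :
    x ∈ ringSet K z n h ↔ ∃ p ∈ ringIdx n h, ∃ k ∈ K, z p + k = x := by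
  simp only [ringSet, Set.mem_iUnion, Set.mem_image, exists_prop]

lemma no_escape (f g : V →L[ℝ] ℝ) (hinj : ∀ x, f x = 0 → g x = 0 → x = 0)
    {K : Set V} (hK : IsConnected K) (hKc : IsCompact K) {d1 d2 e q : V} {r : ℝ}
    (hd1 : ∀ x, ‖x - d1‖ < r → x ∈ K - K) (hd2 : ∀ x, ‖x - d2‖ < r → x ∈ K - K)
    (h11 : f d1 = 1) (h12 : g d1 = 0) (h21 : f d2 = 0) (h22 : g d2 = 1)
    (C : ℝ) (hCb : ∀ x k, ‖x‖ < r / 2 → k ∈ K → |f (x + k)| ≤ C ∧ |g (x + k)| ≤ C)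
    (n h : ℤ) (R : ℝ) (hC0 : 0 ≤ C) (hC : C < h) (hR : h + C < R) (hn : R + C < n)
    (z : ℤ × ℤ → V) (hz : ∀ p, ‖z p - (e + (p.1 : ℝ) • d1 + (p.2 : ℝ) • d2)‖ < r / 2)
    (hq : R < max |f (q - e)| |g (q - e)|) :
    ¬ JoinedIn (ringSet K z n h)ᶜ e q := by
  rintro ⟨γ, hγ⟩
  have hR0 : 0 < R := by linarith
  have hn0 : (0 : ℤ) ≤ n := by
    have : (0 : ℝ) ≤ n := by linarith
    exact_mod_cast this
  have hhn : h ≤ n := by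
    have : (h : ℝ) ≤ n := by linarith
    exact_mod_cast this
  have hh0 : 0 ≤ h := by
    have : (0 : ℝ) ≤ h := by linarith
    exact_mod_cast this
  have hf : ∀ p, ∀ k ∈ K, |f (z p + k - e) - p.1| ≤ C := by
    intro p k hk
    have := (hCb _ k (hz p) hk).1
    simp only [map_add, map_sub, map_smul, h11, h21, smul_eq_mul] at this ⊢
    convert this using 2; ring
  have hg : ∀ p, ∀ k ∈ K, |g (z p + k - e) - p.2| ≤ C := by
    intro p k hk
    have := (hCb _ k (hz p) hk).2
    simp only [map_add, map_sub, map_smul, h12, h22, smul_eq_mul] at this ⊢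
    convert this using 2; ring
  have hs1 : ∀ i j : ℤ, z (i + 1, j) - z (i, j) ∈ K - K := by
    intro i j
    apply hd1
    have e1 : z (i + 1, j) - z (i, j) - d1 =
        (z (i + 1, j) - (e + ((i + 1 : ℤ) : ℝ) • d1 + (j : ℝ) • d2)) -
        (z (i, j) - (e + (i : ℝ) • d1 + (j : ℝ) • d2)) := by push_cast; module
    rw [e1]
    have := norm_sub_le (z (i + 1, j) - (e + ((i + 1 : ℤ) : ℝ) • d1 + (j : ℝ) • d2))
      (z (i, j) - (e + (i : ℝ) • d1 + (j : ℝ) • d2))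
    have h1 := hz (i + 1, j)
    have h2 := hz (i, j)
    simp only at h1 h2
    linarith
  have hs2 : ∀ i j : ℤ, z (i, j + 1) - z (i, j) ∈ K - K := by
    intro i j
    apply hd2
    have e1 : z (i, j + 1) - z (i, j) - d2 =
        (z (i, j + 1) - (e + (i : ℝ) • d1 + ((j + 1 : ℤ) : ℝ) • d2)) -
        (z (i, j) - (e + (i : ℝ) • d1 + (j : ℝ) • d2)) := by push_cast; module
    rw [e1]
    have := norm_sub_le (z (i, j + 1) - (e + (i : ℝ) • d1 + ((j + 1 : ℤ) : ℝ) • d2))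
      (z (i, j) - (e + (i : ℝ) • d1 + (j : ℝ) • d2))
    have h1 := hz (i, j + 1)
    have h2 := hz (i, j)
    simp only at h1 h2
    linarith
  -- first exit
  set N : ℝ → ℝ := fun t => max |f (γ.extend t - e)| |g (γ.extend t - e)| with hN
  have hce := γ.continuous_extend
  have hNc : Continuous N := by fun_prop
  have hN0 : N 0 = 0 := by simp [hN]
  have hN1 : R < N 1 := by simpa [hN] using hq
  have hcomp : IsCompact (Set.Icc (0 : ℝ) 1 ∩ N ⁻¹' {R}) :=
    isCompact_Icc.inter_right (isClosed_singleton.preimage hNc)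
  have hne : (Set.Icc (0 : ℝ) 1 ∩ N ⁻¹' {R}).Nonempty := by
    obtain ⟨t, ht, hte⟩ := intermediate_value_Icc (zero_le_one' ℝ) hNc.continuousOn
      (show R ∈ Set.Icc (N 0) (N 1) from ⟨by linarith, hN1.le⟩)
    exact ⟨t, ht, hte⟩
  obtain ⟨T, ⟨hT, hTR⟩, hTl⟩ := hcomp.exists_isLeast hne
  have hTR' : N T = R := hTR
  have hle : ∀ t ∈ Set.Icc 0 T, N t ≤ R := by
    intro t ht
    by_contra hlt
    push Not at hlt
    obtain ⟨s, hs, hse⟩ := intermediate_value_Icc ht.1 hNc.continuousOn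
      (show R ∈ Set.Icc (N 0) (N t) from ⟨by linarith, hlt.le⟩)
    have hTs : T ≤ s := hTl ⟨⟨hs.1, hs.2.trans (ht.2.trans hT.2)⟩, hse⟩
    have : t = T := le_antisymm ht.2 (hTs.trans hs.2)
    rw [this] at hlt
    linarith
  set A : Set V := γ.extend '' Set.Icc 0 T with hA
  have hAp : IsPreconnected A := isPreconnected_Icc.image _ hce.continuousOn
  have heA : e ∈ A := ⟨0, ⟨le_rfl, hT.1⟩, by simp⟩
  have haA : γ.extend T ∈ A := ⟨T, ⟨hT.1, le_rfl⟩, rfl⟩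
  have hAf : ∀ x ∈ A, |f (x - e)| ≤ R := by
    rintro x ⟨t, ht, rfl⟩
    exact (le_max_left _ _).trans (hle t ht)
  have hAg : ∀ x ∈ A, |g (x - e)| ≤ R := by
    rintro x ⟨t, ht, rfl⟩
    exact (le_max_right _ _).trans (hle t ht)
  have hAM : ∀ x ∈ A, x ∉ ringSet K z n h := by
    rintro x ⟨t, ht, rfl⟩
    have : γ.extend t ∈ Set.range γ := by rw [← γ.extend_range]; exact ⟨t, rfl⟩
    obtain ⟨s, hs⟩ := this
    rw [← hs]; exact hγ s
  have fin : ∀ w : ℤ → ℤ × ℤ, (∀ i ∈ Set.Icc (-n) n, w i ∈ ringIdx n h) →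
      ¬ (A ∩ ⋃ i ∈ Set.Icc (-n) n, (fun k => z (w i) + k) '' K).Nonempty := by
    rintro w hw ⟨x, hxA, hx⟩
    simp only [Set.mem_iUnion, Set.mem_image] at hx
    obtain ⟨i, hi, k, hk, hx⟩ := hx
    exact hAM x hxA (mem_ringSet.2 ⟨w i, hw i hi, k, hk, hx⟩)
  have hneg : ∀ φ : V →L[ℝ] ℝ, ∀ x, (-φ) x = 0 → φ x = 0 := by
    intro φ x hx; simpa using hx
  have hcase : R ≤ |f (γ.extend T - e)| ∨ R ≤ |g (γ.extend T - e)| := by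
    rw [← le_max_iff]; exact hTR'.ge
  rcases hcase with hc | hc
  · rcases le_abs.1 hc with hc | hc
    · refine fin (fun i => (h, i)) ?_ (chain_block g f (fun x a b => hinj x b a) hK hKc hAp heA haA
        (fun i => z (h, i)) (fun i => hs2 h i) C h R n hn0 (fun i => hg (h, i))
        (fun i => hf (h, i)) hC hR hn hAg hc)
      rintro i ⟨hi1, hi2⟩
      rw [mem_ringIdx]; omega
    · refine fin (fun i => (-h, i)) ?_ (chain_block g (-f) (fun x a b => hinj x (hneg f x b) a)
        hK hKc hAp heA haA
        (fun i => z (-h, i)) (fun i => hs2 (-h) i) C h R n hn0 (fun i => hg (-h, i))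
        (fun i k hk => ?_) hC hR hn hAg hc)
      · rintro i ⟨hi1, hi2⟩
        rw [mem_ringIdx]; omega
      · have := hf (-h, i) k hk
        rw [← abs_neg] at this
        convert this using 2
        simp only [neg_apply]; push_cast; ring
  · rcases le_abs.1 hc with hc | hc
    · refine fin (fun i => (i, h)) ?_ (chain_block f g hinj hK hKc hAp heA haA
        (fun i => z (i, h)) (fun i => hs1 i h) C h R n hn0 (fun i => hf (i, h))
        (fun i => hg (i, h)) hC hR hn hAf hc)
      rintro i ⟨hi1, hi2⟩
      rw [mem_ringIdx]; omega
    · refine fin (fun i => (i, -h)) ?_ (chain_block f (-g) (fun x a b => hinj x a (hneg g x b))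
        hK hKc hAp heA haA
        (fun i => z (i, -h)) (fun i => hs1 i (-h)) C h R n hn0 (fun i => hf (i, -h))
        (fun i k hk => ?_) hC hR hn hAf hc)
      · rintro i ⟨hi1, hi2⟩
        rw [mem_ringIdx]; omega
      · have := hg (i, -h) k hk
        rw [← abs_neg] at this
        convert this using 2
        simp only [neg_apply]; push_cast; ring

lemma no_dense_avoid (f g : V →L[ℝ] ℝ) (hinj : ∀ x, f x = 0 → g x = 0 → x = 0)
    {K E G : Set V} (hK : IsConnected K) (hKc : IsCompact K) {d1 d2 : V} {r : ℝ} (hr : 0 < r)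
    (hd1 : ∀ x, ‖x - d1‖ < r → x ∈ K - K) (hd2 : ∀ x, ‖x - d2‖ < r → x ∈ K - K)
    (h11 : f d1 = 1) (h12 : g d1 = 0) (h21 : f d2 = 0) (h22 : g d2 = 1)
    (hE : IsConnected E) (hE2 : E.Nontrivial) (hG : Dense G)
    (hGE : ∀ z ∈ G, ∀ k ∈ K, z + k ∉ E) : False := by
  obtain ⟨e, he, e', he', hne⟩ := hE2
  set v := e' - e with hv
  have hv0 : v ≠ 0 := sub_ne_zero.2 hne.symm
  -- constants
  obtain ⟨D, hD⟩ := hKc.exists_bound_of_continuousOn (f := fun x => x) continuousOn_id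
  obtain ⟨k0, hk0⟩ := hK.nonempty
  have hD0 : 0 ≤ D := (norm_nonneg _).trans (hD k0 hk0)
  set C : ℝ := (‖f‖ + ‖g‖) * (r / 2 + D) with hCdef
  have hC0 : 0 ≤ C := by positivity
  have hCb : ∀ x k, ‖x‖ < r / 2 → k ∈ K → |f (x + k)| ≤ C ∧ |g (x + k)| ≤ C := by
    intro x k hx hk
    have h0 : ‖x + k‖ ≤ r / 2 + D := (norm_add_le x k).trans (add_le_add hx.le (hD k hk))
    have h1 := f.le_opNorm (x + k)
    have h2 := g.le_opNorm (x + k)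
    rw [Real.norm_eq_abs] at h1 h2
    have h3 : ‖f‖ * ‖x + k‖ ≤ ‖f‖ * (r / 2 + D) := by gcongr
    have h4 : ‖g‖ * ‖x + k‖ ≤ ‖g‖ * (r / 2 + D) := by gcongr
    have h5 : 0 ≤ ‖f‖ * (r / 2 + D) := by positivity
    have h6 : 0 ≤ ‖g‖ * (r / 2 + D) := by positivity
    constructor <;> (rw [hCdef]; linarith)
  obtain ⟨h, hh⟩ := exists_int_gt C
  set R : ℝ := h + C + 1 with hRdef
  obtain ⟨n, hn⟩ := exists_int_gt (R + C)
  have hvpos : 0 < max |f v| |g v| := by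
    rw [lt_max_iff]
    by_contra hcon
    push Not at hcon
    exact hv0 (hinj v (abs_nonpos_iff.1 hcon.1) (abs_nonpos_iff.1 hcon.2))
  obtain ⟨N, hN⟩ := Archimedean.arch ((n : ℝ) + C + 1) hvpos
  rw [nsmul_eq_mul] at hN
  have hfar : (n : ℝ) + C < max |f (e - (N : ℝ) • v - e)| |g (e - (N : ℝ) • v - e)| := by
    have e1 : e - (N : ℝ) • v - e = -((N : ℝ) • v) := by abel
    rw [e1, map_neg, map_neg, map_smul, map_smul, abs_neg, abs_neg, smul_eq_mul, smul_eq_mul,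
      abs_mul, abs_mul, Nat.abs_cast, ← mul_max_of_nonneg _ _ (Nat.cast_nonneg N)]
    linarith
  have main : ∀ k : ℕ, ∀ z : ℤ × ℤ → V,
      (∀ p, ‖z p - (e + (p.1 : ℝ) • d1 + (p.2 : ℝ) • d2)‖ < r / 2) →
      ¬ JoinedIn (ringSet K z n h)ᶜ (e - (k : ℝ) • v) (e - (N : ℝ) • v) := by
    intro k
    induction k with
    | zero =>
      intro z hz
      have := no_escape f g hinj hK hKc hd1 hd2 h11 h12 h21 h22 C hCb n h R hC0 hh
        (by linarith) hn z hz (q := e - (N : ℝ) • v) (by linarith)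
      simpa using this
    | succ k ih =>
      rintro z hz ⟨γ, hγ⟩
      have hdis : Disjoint (Set.range γ) (ringSet K z n h) := by
        rw [Set.disjoint_left]
        rintro x ⟨t, rfl⟩ hx
        exact hγ t hx
      obtain ⟨δ, hδ, hδd⟩ := hdis.exists_thickenings (isCompact_range γ.continuous)
        (ringSet_closed hKc z n h)
      have hch : ∀ p, ∃ y, y + ((k + 1 : ℕ) : ℝ) • v ∈ G ∧ ‖y - z p‖ < δ ∧
          ‖y - (e + (p.1 : ℝ) • d1 + (p.2 : ℝ) • d2)‖ < r / 2 := by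
        intro p
        set ε := min δ (r / 2 - ‖z p - (e + (p.1 : ℝ) • d1 + (p.2 : ℝ) • d2)‖) with hε
        have hε0 : 0 < ε := lt_min hδ (by linarith [hz p])
        obtain ⟨y, hyG, hy⟩ := hG.exists_dist_lt (z p + ((k + 1 : ℕ) : ℝ) • v) hε0
        refine ⟨y - ((k + 1 : ℕ) : ℝ) • v, by simpa using hyG, ?_⟩
        have e1 : ‖y - ((k + 1 : ℕ) : ℝ) • v - z p‖ < ε := by
          rw [dist_comm, dist_eq_norm] at hy
          have e0 : y - ((k + 1 : ℕ) : ℝ) • v - z p = y - (z p + ((k + 1 : ℕ) : ℝ) • v) := by abel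
          rw [e0]; exact hy
        refine ⟨e1.trans_le (min_le_left _ _), ?_⟩
        have e2 := norm_sub_le_norm_sub_add_norm_sub (y - ((k + 1 : ℕ) : ℝ) • v) (z p)
          (e + (p.1 : ℝ) • d1 + (p.2 : ℝ) • d2)
        have e3 := e1.trans_le (min_le_right _ _)
        linarith
      choose z' hz'G hz'd hz'r using hch
      apply ih z' hz'r
      have j1 : JoinedIn (ringSet K z' n h)ᶜ (e - ((k + 1 : ℕ) : ℝ) • v) (e - (N : ℝ) • v) := by
        refine ⟨γ, fun t ht => ?_⟩
        obtain ⟨p, hp, κ, hκ, hx⟩ := mem_ringSet.1 ht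
        refine Set.disjoint_left.1 hδd
          (Metric.self_subset_thickening hδ _ ⟨t, rfl⟩) ?_
        rw [Metric.mem_thickening_iff]
        refine ⟨z p + κ, mem_ringSet.2 ⟨p, hp, κ, hκ, rfl⟩, ?_⟩
        rw [← hx, dist_eq_norm]
        simpa using hz'd p
      have j2 : JoinedIn (ringSet K z' n h)ᶜ (e - ((k + 1 : ℕ) : ℝ) • v) (e - (k : ℝ) • v) := by
        refine joinedIn_of_connected (ringSet_closed hKc z' n h).isOpen_compl
          (S := (fun x => x - ((k + 1 : ℕ) : ℝ) • v) '' E)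
          (hE.image _ (by fun_prop)).isPreconnected ?_ ⟨e, he, rfl⟩ ⟨e', he', ?_⟩
        · rintro _ ⟨x, hx, rfl⟩ hmem
          obtain ⟨p, hp, κ, hκ, hx'⟩ := mem_ringSet.1 hmem
          refine hGE _ (hz'G p) κ hκ ?_
          have : z' p + ((k + 1 : ℕ) : ℝ) • v + κ = x := by
            simp only at hx'
            rw [eq_sub_iff_add_eq] at hx'
            rw [← hx']; abel
          rw [this]; exact hx
        · have : e' = e + v := by rw [hv]; abel
          simp only [this]; push_cast; module
      exact j2.symm.trans j1
  refine main N (fun p => e + (p.1 : ℝ) • d1 + (p.2 : ℝ) • d2) (by intro p; simpa using hr) ?_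
  refine JoinedIn.refl ?_
  intro hmem
  obtain ⟨p, hp, κ, hκ, hx⟩ := mem_ringSet.1 hmem
  have hb := hCb 0 κ (by simpa using hr) hκ
  rw [zero_add] at hb
  have p1 : |(p.1 : ℝ)| ≤ n := by
    rw [abs_le]; exact ⟨by exact_mod_cast hp.1.1, by exact_mod_cast hp.1.2⟩
  have p2 : |(p.2 : ℝ)| ≤ n := by
    rw [abs_le]; exact ⟨by exact_mod_cast hp.2.1.1, by exact_mod_cast hp.2.1.2⟩
  rw [← hx] at hfar
  rcases lt_max_iff.1 hfar with hc | hc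
  · have e1 : f (e + (p.1 : ℝ) • d1 + (p.2 : ℝ) • d2 + κ - e) = p.1 + f κ := by
      simp only [map_add, map_sub, map_smul, h11, h21, smul_eq_mul]; ring
    rw [e1] at hc
    linarith [abs_add_le (p.1 : ℝ) (f κ), hb.1]
  · have e1 : g (e + (p.1 : ℝ) • d1 + (p.2 : ℝ) • d2 + κ - e) = p.2 + g κ := by
      simp only [map_add, map_sub, map_smul, h12, h22, smul_eq_mul]; ring
    rw [e1] at hc
    linarith [abs_add_le (p.2 : ℝ) (g κ), hb.2]
end

/-- Dual frame of two independent vectors of the plane. -/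
lemma exists_frame (u w : EuclideanSpace ℝ (Fin 2)) (h : u 0 * w 1 - u 1 * w 0 ≠ 0) :
    ∃ f g : EuclideanSpace ℝ (Fin 2) →L[ℝ] ℝ, (∀ x, f x = 0 → g x = 0 → x = 0) ∧
      f u = 1 ∧ g u = 0 ∧ f w = 0 ∧ g w = 1 := by
  set Δ := u 0 * w 1 - u 1 * w 0 with hΔ
  set p0 : EuclideanSpace ℝ (Fin 2) →L[ℝ] ℝ := EuclideanSpace.proj 0
  set p1 : EuclideanSpace ℝ (Fin 2) →L[ℝ] ℝ := EuclideanSpace.proj 1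
  have hp0 : ∀ x, p0 x = x 0 := fun x => rfl
  have hp1 : ∀ x, p1 x = x 1 := fun x => rfl
  have hf : ∀ x, (Δ⁻¹ • (w 1 • p0 - w 0 • p1)) x = Δ⁻¹ * (w 1 * x 0 - w 0 * x 1) := by
    intro x; simp [hp0, hp1]
  have hg : ∀ x, (Δ⁻¹ • (u 0 • p1 - u 1 • p0)) x = Δ⁻¹ * (u 0 * x 1 - u 1 * x 0) := by
    intro x; simp [hp0, hp1]
  refine ⟨Δ⁻¹ • (w 1 • p0 - w 0 • p1), Δ⁻¹ • (u 0 • p1 - u 1 • p0), ?_, ?_, ?_, ?_, ?_⟩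
  · intro x h1 h2
    rw [hf] at h1
    rw [hg] at h2
    have h1' := (mul_eq_zero.1 h1).resolve_left (inv_ne_zero h)
    have h2' := (mul_eq_zero.1 h2).resolve_left (inv_ne_zero h)
    have x0 : Δ * x 0 = 0 := by rw [hΔ]; linear_combination u 0 * h1' + w 0 * h2'
    have x1 : Δ * x 1 = 0 := by rw [hΔ]; linear_combination u 1 * h1' + w 1 * h2'
    ext i
    fin_cases i
    · simpa [h] using x0
    · simpa [h] using x1
  · rw [hf, inv_mul_eq_one₀ h, hΔ]; ring
  · rw [hg]; ring
  · rw [hf]; ring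
  · rw [hg, inv_mul_eq_one₀ h]

/-- A flat planar continuum is a segment. -/
lemma flat_is_segment {F : Set (EuclideanSpace ℝ (Fin 2))} (hF : IsConnected F)
    (hFc : IsCompact F) {a b : EuclideanSpace ℝ (Fin 2)} (hab : a ≠ b)
    (h : ∀ c ∈ F, (b - a) 0 * (c - a) 1 - (b - a) 1 * (c - a) 0 = 0) :
    ∃ p q : EuclideanSpace ℝ (Fin 2), F = segment ℝ p q := by
  set u := b - a with hu
  have hu0 : u 0 ^ 2 + u 1 ^ 2 ≠ 0 := by
    intro h0
    apply hab
    have h1 : u 0 = 0 := by nlinarith [sq_nonneg (u 0), sq_nonneg (u 1)]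
    have h2 : u 1 = 0 := by nlinarith [sq_nonneg (u 0), sq_nonneg (u 1)]
    have : u = 0 := by
      ext i
      fin_cases i
      · exact h1
      · exact h2
    exact (sub_eq_zero.1 this).symm
  set φ : EuclideanSpace ℝ (Fin 2) → ℝ := fun x =>
    (u 0 * (x - a) 0 + u 1 * (x - a) 1) / (u 0 ^ 2 + u 1 ^ 2) with hφ
  have hφc : Continuous φ := by fun_prop
  have hx : ∀ x ∈ F, AffineMap.lineMap a b (φ x) = x := by
    intro x hxF
    have h1 := h x hxF
    rw [AffineMap.lineMap_apply_module']
    rw [← hu, ← eq_sub_iff_add_eq]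
    ext i
    fin_cases i
    · simp only [Fin.zero_eta, PiLp.smul_apply, smul_eq_mul, hφ]
      rw [div_mul_eq_mul_div, div_eq_iff hu0]
      linear_combination u 1 * h1
    · simp only [Fin.mk_one, PiLp.smul_apply, smul_eq_mul, hφ]
      rw [div_mul_eq_mul_div, div_eq_iff hu0]
      linear_combination - u 0 * h1
  have hI := eq_Icc_of_connected_compact (hF.image φ hφc.continuousOn) (hFc.image hφc)
  set m := sInf (φ '' F)
  set M := sSup (φ '' F)
  have hmM : m ≤ M := by
    have := (hF.image φ hφc.continuousOn).nonempty
    rw [hI] at this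
    exact Set.nonempty_Icc.1 this
  refine ⟨AffineMap.lineMap a b m, AffineMap.lineMap a b M, ?_⟩
  rw [← image_segment ℝ (AffineMap.lineMap a b) m M, segment_eq_Icc hmM, ← hI, Set.image_image]
  ext x
  constructor
  · intro hxF
    exact ⟨x, hxF, hx x hxF⟩
  · rintro ⟨y, hy, rfl⟩
    beta_reduce; rw [hx y hy]; exact hy

/-- Let `E, F ⊂ ℝ²` be connected sets each with cardinality greater than 1. If `F` is
compact and not a line segment, then the arithmetic sum `E + F` has non-empty interior. -/
theorem sum_connected_compact_not_segment_nonempty_interior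
    (E F : Set (EuclideanSpace ℝ (Fin 2)))
    (hEconn : IsConnected E) (hEcard : E.Nontrivial)
    (hFconn : IsConnected F) (hFcard : F.Nontrivial)
    (hFcpt : IsCompact F)
    (hFseg : ¬ ∃ a b : EuclideanSpace ℝ (Fin 2), F = segment ℝ a b) :
    (interior (E + F)).Nonempty := by
  by_contra hint
  rw [Set.not_nonempty_iff_eq_empty] at hint
  have hG : Dense (E + F)ᶜ := interior_eq_empty_iff_dense_compl.1 hint
  obtain ⟨a, ha, b, hb, hab⟩ := hFcard
  obtain ⟨c, hc, hdet⟩ : ∃ c ∈ F, (b - a) 0 * (c - a) 1 - (b - a) 1 * (c - a) 0 ≠ 0 := by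
    by_contra hcon
    push Not at hcon
    exact hFseg (flat_is_segment hFconn hFcpt hab hcon)
  have hK : IsConnected (-F) := by
    rw [← Set.image_neg_eq_neg]
    exact hFconn.image _ continuous_neg.continuousOn
  have hKc : IsCompact (-F) := hFcpt.neg
  obtain ⟨f, g, hinj, h1, h2, h3, h4⟩ := exists_frame (-b - -a) (-c - -a) (by
    simp only [PiLp.sub_apply, PiLp.neg_apply] at hdet ⊢
    intro h0
    apply hdet
    linear_combination h0)
  obtain ⟨d, hd⟩ := diff_interior hK hKc f g hinj (Set.neg_mem_neg.2 ha) (Set.neg_mem_neg.2 hb)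
    (Set.neg_mem_neg.2 hc) h1 h2 h3 h4
  -- two independent interior vectors
  obtain ⟨d1, d2, hd1, hd2, hdd⟩ : ∃ d1 d2 : EuclideanSpace ℝ (Fin 2),
      d1 ∈ interior (-F - -F) ∧ d2 ∈ interior (-F - -F) ∧ d1 0 * d2 1 - d1 1 * d2 0 ≠ 0 := by
    obtain ⟨r, hr, hball⟩ := Metric.isOpen_iff.1 isOpen_interior d hd
    by_contra hcon
    push Not at hcon
    have step : ∀ y, ∃ s : ℝ, 0 < s ∧ d + s • y ∈ interior (-F - -F) := by
      intro y
      have hy : 0 < ‖y‖ + 1 := by positivity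
      refine ⟨r / (‖y‖ + 1), by positivity, hball ?_⟩
      rw [Metric.mem_ball, dist_eq_norm, add_sub_cancel_left, norm_smul, Real.norm_eq_abs,
        abs_of_pos (by positivity), div_mul_eq_mul_div, div_lt_iff₀ hy]
      nlinarith
    obtain ⟨s, hs, hsd⟩ := step !₂[1, 0]
    obtain ⟨t, ht, htd⟩ := step !₂[0, 1]
    have q1 := hcon _ _ hd hsd
    have q2 := hcon _ _ hd htd
    have q3 := hcon _ _ hsd htd
    simp at q1 q2 q3
    have : s * t = 0 := by linear_combination q3 + q1 - q2
    exact (mul_pos hs ht).ne' this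
  obtain ⟨r1, hr1, hb1⟩ := Metric.isOpen_iff.1 isOpen_interior d1 hd1
  obtain ⟨r2, hr2, hb2⟩ := Metric.isOpen_iff.1 isOpen_interior d2 hd2
  obtain ⟨f', g', hinj', h1', h2', h3', h4'⟩ := exists_frame d1 d2 hdd
  refine no_dense_avoid f' g' hinj' hK hKc (lt_min hr1 hr2) (fun x hx => ?_) (fun x hx => ?_)
    h1' h2' h3' h4' hEconn hEcard hG ?_
  · refine interior_subset (hb1 ?_)
    rw [Metric.mem_ball, dist_eq_norm]
    exact hx.trans_le (min_le_left _ _)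
  · refine interior_subset (hb2 ?_)
    rw [Metric.mem_ball, dist_eq_norm]
    exact hx.trans_le (min_le_right _ _)
  · intro z hz k hk hzE
    apply hz
    exact ⟨z + k, hzE, -k, hk, by simp⟩
end

section
/- Let $E \subset \mathbb{R}^d$ be a connected set with cardinality greater than $1$, and let $F \subset \mathbb{R}^d$ be compact. Suppose there exists a compact set $K \subset \mathbb{R}^d$ such that: (i) $K$ is contained in a hyperplane (an affine subspace of $\mathbb{R}^d$ of codimension $1$), and (ii) the complement $(F \cup K)^c = \mathbb{R}^d \setminus (F \cup K)$ has at least one bounded connected component. Then the arithmetic sum $E + F = \{x + y : x \in E, y \in F\}$ has non-empty interior. -/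
open Pointwise

/-- Core argument: `P` is a bounded open set strictly above the hyperplane `φ = c`, whose frontier
strictly above this hyperplane lies in `F`. -/
theorem core_aux {d : ℕ} (E F P : Set (EuclideanSpace ℝ (Fin d)))
    (hE : IsPreconnected E)
    (φ : EuclideanSpace ℝ (Fin d) →ₗ[ℝ] ℝ) (c : ℝ)
    (e₁ e₂ : EuclideanSpace ℝ (Fin d)) (he₁ : e₁ ∈ E) (he₂ : e₂ ∈ E) (hne : e₁ ≠ e₂)
    (hle : φ e₂ ≤ φ e₁)
    (hPo : IsOpen P) (hPb : Bornology.IsBounded P) (hPn : P.Nonempty)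
    (hPc : ∀ x ∈ P, c < φ x)
    (hPF : ∀ x, x ∈ closure P → x ∉ P → c < φ x → x ∈ F)
    (hD : Dense (E + F)ᶜ) : False := by
  have hφ : Continuous φ := φ.continuous_of_finiteDimensional
  have hcl : IsCompact (closure P) := hPb.isCompact_closure
  obtain ⟨x0, hx0, hM⟩ := hcl.exists_isMaxOn hPn.closure hφ.continuousOn
  have hM' : ∀ x ∈ closure P, φ x ≤ φ x0 := fun x hx => hM hx
  obtain ⟨p0, hp0⟩ := hPn
  have hcM : c < φ x0 := (hPc p0 hp0).trans_le (hM' p0 (subset_closure hp0))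
  obtain ⟨m, hm⟩ : ∃ m, m = (φ x0 + c) / 2 := ⟨_, rfl⟩
  set O : Set (EuclideanSpace ℝ (Fin d)) := P ∩ {x | m < φ x} with hO
  have hHo : IsOpen {x | m < φ x} := isOpen_lt continuous_const hφ
  have hOo : IsOpen O := hPo.inter hHo
  have hOn : O.Nonempty := by
    have := mem_closure_iff.1 hx0 _ hHo (by simp only [Set.mem_ofPred_eq]; linarith)
    rwa [Set.inter_comm] at this
  -- choose `u`
  set v := e₁ - e₂ with hv
  have hv0 : v ≠ 0 := sub_ne_zero.2 hne
  have hφv : 0 ≤ φ v := by rw [hv, map_sub]; linarith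
  have hu : ∃ u ∈ O, u + v ∉ closure P := by
    have hclO : IsCompact (closure O) := (hPb.subset Set.inter_subset_left).isCompact_closure
    have hcont : Continuous (fun x : EuclideanSpace ℝ (Fin d) => inner ℝ v x) := by fun_prop
    obtain ⟨y, hy, hymax⟩ := hclO.exists_isMaxOn hOn.closure hcont.continuousOn
    have hvv : 0 < inner ℝ v v := real_inner_self_pos.2 hv0
    have hopen : IsOpen {x | inner ℝ v y - inner ℝ v v < inner ℝ v x} :=
      isOpen_lt continuous_const hcont
    obtain ⟨u, hu1, hu2⟩ := mem_closure_iff.1 hy _ hopen (by simp only [Set.mem_ofPred_eq]; linarith)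
    refine ⟨u, hu2, fun h => ?_⟩
    have h2 : u + v ∈ closure O := by
      rw [mem_closure_iff] at h ⊢
      intro o ho hmem
      obtain ⟨q, hq1, hq2⟩ := h _ (ho.inter hHo) ⟨hmem, by
        have : m < φ u := hu2.2
        simp only [Set.mem_ofPred_eq, map_add]; linarith⟩
      exact ⟨q, hq1.1, hq2, hq1.2⟩
    have h3 : inner ℝ v (u + v) ≤ inner ℝ v y := hymax h2
    rw [inner_add_right] at h3
    simp only [Set.mem_ofPred_eq] at hu1
    linarith
  obtain ⟨u, huO, huv⟩ := hu
  -- choose `z`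
  obtain ⟨z, hzA, hzD⟩ : ∃ z, (z - e₁ ∈ O ∧ z - e₂ ∉ closure P) ∧ z ∈ (E + F)ᶜ := by
    have ho : IsOpen {z | z - e₁ ∈ O ∧ z - e₂ ∈ (closure P)ᶜ} :=
      (hOo.preimage (by fun_prop : Continuous fun z => z - e₁)).inter
        (isClosed_closure.isOpen_compl.preimage (by fun_prop : Continuous fun z => z - e₂))
    obtain ⟨z, h1, h2⟩ := hD.inter_open_nonempty _ ho ⟨u + e₁, by
      refine ⟨by simpa using huO, ?_⟩
      have : u + e₁ - e₂ = u + v := by rw [hv]; abel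
      rw [this]; exact huv⟩
    exact ⟨z, h1, h2⟩
  -- choose the translations
  have hw : ∀ x, ∃ w, x - w ∈ O ∧ z - w ∈ (E + F)ᶜ := by
    intro x
    have ho : IsOpen {y | x - (z - y) ∈ O} :=
      hOo.preimage (by fun_prop : Continuous fun y => x - (z - y))
    obtain ⟨y, h1, h2⟩ := hD.inter_open_nonempty _ ho ⟨u - x + z, by
      have : x - (z - (u - x + z)) = u := by abel
      simpa only [Set.mem_ofPred_eq, this] using huO⟩
    exact ⟨z - y, h1, by simpa using h2⟩
  choose w hwO hwD using hw
  have hL : IsCompact (closure P ∩ {x | φ x = c}) :=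
    hcl.inter_right (isClosed_eq hφ continuous_const)
  obtain ⟨t, htL, ht⟩ := hL.elim_nhds_subcover (fun x => {y | y - w x ∈ P}) (fun x _ =>
    (hPo.preimage (by fun_prop : Continuous fun y => y - w x)).mem_nhds (hwO x).1)
  set V : Set (EuclideanSpace ℝ (Fin d)) := P \ ⋃ x ∈ t, {y | y - w x ∈ closure P} with hV
  have hVo : IsOpen V := hPo.sdiff (Set.Finite.isClosed_biUnion t.finite_toSet fun x _ =>
    isClosed_closure.preimage (by fun_prop : Continuous fun y => y - w x))
  have hVP : V ⊆ P := Set.sdiff_subset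
  have hS : IsPreconnected ((fun e => z - e) '' E) :=
    hE.image _ (by fun_prop)
  have hp : z - e₁ ∈ V := by
    refine ⟨hzA.1.1, ?_⟩
    simp only [Set.mem_iUnion, not_exists]
    intro x hx hmem
    have h1 := hM' _ hmem
    have h2 : m < φ (z - e₁) := hzA.1.2
    have h3 : m < φ (x - w x) := (hwO x).2
    have h4 : φ x = c := (htL x hx).2
    rw [map_sub] at h1 h3
    linarith
  obtain ⟨e, heE, hy1, hy2⟩ : ∃ e ∈ E, z - e ∈ closure V ∧ z - e ∉ V := by
    by_contra! hno
    obtain ⟨q, -, hq1, hq2⟩ := hS V (closure V)ᶜ hVo isClosed_closure.isOpen_compl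
      (by
        rintro _ ⟨e, he, rfl⟩
        by_cases h : z - e ∈ closure V
        · exact Or.inl (hno e he h)
        · exact Or.inr h)
      ⟨_, ⟨e₁, he₁, rfl⟩, hp⟩ ⟨_, ⟨e₂, he₂, rfl⟩, fun h => hzA.2 (closure_mono hVP h)⟩
    exact hq2 (subset_closure hq1)
  have hycl : z - e ∈ closure P := closure_mono hVP hy1
  have hnot : ∀ x ∈ t, z - e - w x ∉ P := by
    intro x hx h
    obtain ⟨q, hq1, hq2⟩ := mem_closure_iff.1 hy1 _
      (hPo.preimage (by fun_prop : Continuous fun y => y - w x)) h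
    exact hq2.2 (Set.mem_biUnion hx (subset_closure hq1))
  have hnF : z - e ∉ F := fun h => hzD ⟨e, heE, z - e, h, by simp⟩
  by_cases hyP : z - e ∈ P
  · have : z - e ∈ ⋃ x ∈ t, {y | y - w x ∈ closure P} := by
      by_contra h; exact hy2 ⟨hyP, h⟩
    simp only [Set.mem_iUnion] at this
    obtain ⟨x, hx, hmem⟩ := this
    have h3 : m < φ (x - w x) := (hwO x).2
    have h4 : φ x = c := (htL x hx).2
    have h5 := hPc _ hyP
    have hF : z - e - w x ∈ F := hPF _ hmem (hnot x hx) (by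
      rw [map_sub] at h3 ⊢; linarith)
    exact hwD x ⟨e, heE, _, hF, by dsimp only; abel⟩
  · have hge : c ≤ φ (z - e) := by
      have : closure P ⊆ {x | c ≤ φ x} :=
        closure_minimal (fun x hx => (hPc x hx).le) (isClosed_le continuous_const hφ)
      exact this hycl
    rcases hge.lt_or_eq with h | h
    · exact hnF (hPF _ hycl hyP h)
    · have := ht ⟨hycl, h.symm⟩
      simp only [Set.mem_iUnion] at this
      obtain ⟨x, hx, hmem⟩ := this
      exact hnot x hx hmem

theorem half_aux {d : ℕ} (E F K : Set (EuclideanSpace ℝ (Fin d)))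
    (hEconn : IsConnected E) (hEcard : E.Nontrivial)
    (hFcpt : IsCompact F) (hKcpt : IsCompact K)
    (φ : EuclideanSpace ℝ (Fin d) →ₗ[ℝ] ℝ) (c : ℝ)
    (hK : ∀ x ∈ K, φ x = c) (x : EuclideanSpace ℝ (Fin d))
    (hb : Bornology.IsBounded (connectedComponentIn (F ∪ K)ᶜ x))
    (hn : ∃ y ∈ connectedComponentIn (F ∪ K)ᶜ x, c < φ y) (hD : Dense (E + F)ᶜ) : False := by
  have hφ : Continuous φ := φ.continuous_of_finiteDimensional
  have hWo : IsOpen (F ∪ K)ᶜ := (hFcpt.union hKcpt).isClosed.isOpen_compl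
  obtain ⟨e₁, he₁, e₂, he₂, hne, hle⟩ : ∃ e₁ ∈ E, ∃ e₂ ∈ E, e₁ ≠ e₂ ∧ φ e₂ ≤ φ e₁ := by
    obtain ⟨a, ha, b, hb, hab⟩ := hEcard
    rcases le_total (φ a) (φ b) with h | h
    · exact ⟨b, hb, a, ha, hab.symm, h⟩
    · exact ⟨a, ha, b, hb, hab, h⟩
  refine core_aux E F (connectedComponentIn (F ∪ K)ᶜ x ∩ {y | c < φ y}) hEconn.isPreconnected φ c
    e₁ e₂ he₁ he₂ hne hle (hWo.connectedComponentIn.inter (isOpen_lt continuous_const hφ))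
    (hb.subset Set.inter_subset_left) hn (fun y hy => hy.2) ?_ hD
  intro y hycl hyP hyc
  by_contra hyF
  have hyW : y ∈ (F ∪ K)ᶜ := by
    rintro (h | h)
    · exact hyF h
    · exact hyc.ne' (hK y h)
  obtain ⟨q, hq1, hq2⟩ := mem_closure_iff.1 hycl _ (hWo.connectedComponentIn (x := y))
    (mem_connectedComponentIn hyW)
  have h1 := connectedComponentIn_eq hq1
  have h2 := connectedComponentIn_eq hq2.1
  refine hyP ⟨?_, hyc⟩
  rw [h2, ← h1]
  exact mem_connectedComponentIn hyW

/-- Let `E ⊂ ℝ^d` be a connected set with cardinality greater than 1, and `F ⊂ ℝ^d`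
compact. Suppose there exists a compact set `K ⊂ ℝ^d` contained in a hyperplane such
that `(F ∪ K)ᶜ` has at least one bounded connected component. Then `E + F` has
non-empty interior. -/
theorem sum_connected_compact_hyperplane_aux_nonempty_interior
    (d : ℕ) (E F K : Set (EuclideanSpace ℝ (Fin d)))
    (hEconn : IsConnected E) (hEcard : E.Nontrivial)
    (hFcpt : IsCompact F) (hKcpt : IsCompact K)
    (hKplane : ∃ (φ : EuclideanSpace ℝ (Fin d) →ₗ[ℝ] ℝ) (c : ℝ),
      φ ≠ 0 ∧ ∀ x ∈ K, φ x = c)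
    (hcomp : ∃ x ∈ (F ∪ K)ᶜ, Bornology.IsBounded (connectedComponentIn (F ∪ K)ᶜ x)) :
    (interior (E + F)).Nonempty := by
  obtain ⟨φ, c, hφ0, hK⟩ := hKplane
  obtain ⟨x, hx, hb⟩ := hcomp
  by_contra hint
  rw [Set.not_nonempty_iff_eq_empty, interior_eq_empty_iff_dense_compl] at hint
  have hWo : IsOpen (F ∪ K)ᶜ := (hFcpt.union hKcpt).isClosed.isOpen_compl
  have hU := hWo.connectedComponentIn (x := x)
  have hxU := mem_connectedComponentIn hx
  have hne : ∃ y ∈ connectedComponentIn (F ∪ K)ᶜ x, φ y ≠ c := by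
    by_contra! hall
    obtain ⟨a, ha⟩ : ∃ a, φ a ≠ 0 := by
      by_contra! h
      exact hφ0 (LinearMap.ext h)
    have hcont : Continuous (fun s : ℝ => x + s • a) := by fun_prop
    have hev : ∀ᶠ s : ℝ in nhds 0, x + s • a ∈ connectedComponentIn (F ∪ K)ᶜ x :=
      hcont.continuousAt.eventually_mem (hU.mem_nhds (by simpa using hxU))
    obtain ⟨s, hs, hs0⟩ := ((hev.filter_mono nhdsWithin_le_nhds).and
      (self_mem_nhdsWithin : {(0:ℝ)}ᶜ ∈ nhdsWithin 0 {(0:ℝ)}ᶜ)).exists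
    have h1 := hall _ hs
    have h2 := hall _ hxU
    rw [map_add, map_smul, h2, smul_eq_mul] at h1
    have : s * φ a = 0 := by linarith
    rcases mul_eq_zero.1 this with h | h
    · exact hs0 h
    · exact ha h
  obtain ⟨y, hy, hyc⟩ := hne
  rcases lt_or_gt_of_ne hyc with h | h
  · exact half_aux E F K hEconn hEcard hFcpt hKcpt (-φ) (-c) (fun x hx => by simp [hK x hx]) x hb
      ⟨y, hy, by simpa using h⟩ hint
  · exact half_aux E F K hEconn hEcard hFcpt hKcpt φ c hK x hb ⟨y, hy, h⟩ hint
end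

section
/- Let $F$ be a compact connected subset of $\mathbb{R}^2$ with empty interior, and suppose that $F$ is not contained in any affine line in $\mathbb{R}^2$. Then there exists a compact set $K \subset \mathbb{R}^2$ contained in an affine line such that the complement $(F \cup K)^c = \mathbb{R}^2 \setminus (F \cup K)$ has at least one bounded connected component. -/
open Complex in
lemma aux_log (F X : Set ℂ) (hF : IsPreconnected F) (hX : IsClosed X)
    (hFX : ∀ z ∈ F, z ∉ X) (a b : ℂ) (ha : a ∈ F) (hb : b ∈ F) :
    ∃ g : ℂ → ℂ, ContinuousOn g X ∧ ∀ z ∈ X, exp (g z) * (z - b) = z - a := by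
  refine hF.induction₂ (fun a b => ∃ g : ℂ → ℂ, ContinuousOn g X ∧
    ∀ z ∈ X, exp (g z) * (z - b) = z - a) ?_ ?_ ?_ ha hb
  · intro x hx
    obtain ⟨ε, hε, hball⟩ := Metric.isOpen_iff.1 hX.isOpen_compl x (hFX x hx)
    filter_upwards [mem_nhdsWithin_of_mem_nhds (Metric.ball_mem_nhds x hε)] with y hy
    have key : ∀ z ∈ X, z - x ≠ 0 ∧ (1 + (x - y) / (z - x)) ∈ slitPlane := by
      intro z hz
      have h1 : ε ≤ ‖z - x‖ := by
        by_contra! h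
        exact hball (by simpa [dist_eq_norm] using h : z ∈ Metric.ball x ε) hz
      have h2 : ‖x - y‖ < ε := by
        rw [← dist_eq_norm, dist_comm]; exact hy
      refine ⟨norm_pos_iff.1 (hε.trans_le h1), mem_slitPlane_of_norm_lt_one ?_⟩
      rw [norm_div, div_lt_one (hε.trans_le h1)]
      linarith
    refine ⟨fun z => - log (1 + (x - y) / (z - x)), ?_, ?_⟩
    · apply ContinuousOn.neg
      apply ContinuousOn.clog
      · apply ContinuousOn.add continuousOn_const
        apply ContinuousOn.div continuousOn_const (by fun_prop)
        exact fun z hz => (key z hz).1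
      · exact fun z hz => (key z hz).2
    · intro z hz
      obtain ⟨h1, h2⟩ := key z hz
      have h3 := slitPlane_ne_zero h2
      rw [exp_neg, exp_log h3, inv_mul_eq_iff_eq_mul₀ h3]
      field_simp
      ring
  · rintro x y z - - - ⟨g, hg, hg'⟩ ⟨k, hk, hk'⟩
    refine ⟨fun z => g z + k z, hg.add hk, fun w hw => ?_⟩
    rw [exp_add, mul_assoc, hk' w hw, hg' w hw]
  · rintro x y - - ⟨g, hg, hg'⟩
    refine ⟨fun z => - g z, hg.neg, fun w hw => ?_⟩
    rw [← hg' w hw, ← mul_assoc, ← exp_add]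
    simp

open Complex in
lemma aux_const {S : Set ℂ} (hS : IsPreconnected S) (h : ℂ → ℂ) (hc : ContinuousOn h S)
    (he : ∀ z ∈ S, exp (h z) = 1) {x y : ℂ} (hx : x ∈ S) (hy : y ∈ S) : h x = h y := by
  refine hS.induction₂ (fun a b => h a = h b) ?_ ?_ ?_ hx hy
  · intro x hx
    have := Metric.tendsto_nhds.1 (hc x hx) Real.pi Real.pi_pos
    filter_upwards [this, self_mem_nhdsWithin] with y hy hyS
    rw [dist_eq_norm] at hy
    have h1 := (abs_im_le_norm (h y - h x)).trans_lt hy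
    rw [abs_lt] at h1
    have h2 : exp (h y - h x) = exp 0 := by
      rw [exp_sub, he x hx, he y hyS]; simp
    have := exp_inj_of_neg_pi_lt_of_le_pi h1.1 h1.2.le (by simp [Real.pi_pos])
      (by simpa using Real.pi_pos.le) h2
    exact (sub_eq_zero.1 this).symm
  · intro x y z _ _ _ h1 h2; exact h1.trans h2
  · intro x y _ _ h1; exact h1.symm

open Complex in
lemma aux_not_joined (F : Set ℂ) (hF : IsPreconnected F) (hFc : IsClosed F)
    (h0 : (0 : ℂ) ∈ F) (h1 : (1 : ℂ) ∈ F) (t : ℝ) (ht0 : 0 ≤ t) (ht1 : t ≤ 1)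
    (htF : (t : ℂ) ∉ F) :
    ∃ x ∈ (F ∪ (fun r : ℝ => (r : ℂ)) '' Set.Icc 0 1)ᶜ,
    ∃ y ∈ (F ∪ (fun r : ℝ => (r : ℂ)) '' Set.Icc 0 1)ᶜ,
      ¬ JoinedIn (F ∪ (fun r : ℝ => (r : ℂ)) '' Set.Icc 0 1)ᶜ x y := by
  have ht0' : 0 < t := lt_of_le_of_ne ht0 (by rintro rfl; exact htF (by simpa using h0))
  have ht1' : t < 1 := lt_of_le_of_ne ht1 (by rintro rfl; exact htF (by simpa using h1))
  obtain ⟨ε, hε, hball⟩ := Metric.isOpen_iff.1 hFc.isOpen_compl t htF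
  set δ := ε / 2 with hδ
  have hδ0 : 0 < δ := by positivity
  have hseg : ∀ s ∈ Set.Icc (-δ) δ, (t + s * I : ℂ) ∉ F := by
    intro s hs
    apply hball
    have : |s| ≤ δ := abs_le.2 hs
    simp [dist_eq_norm]
    linarith
  have him : ∀ z : ℂ, z.im ≠ 0 → z ∉ (fun r : ℝ => (r : ℂ)) '' Set.Icc 0 1 := by
    rintro z hz ⟨r, -, rfl⟩
    simp at hz
  have hx : (t + δ * I : ℂ) ∈ (F ∪ (fun r : ℝ => (r : ℂ)) '' Set.Icc 0 1)ᶜ := by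
    rintro (h | h)
    · exact hseg δ ⟨by linarith, le_rfl⟩ h
    · exact him _ (by simp [hδ0.ne']) h
  have hy : (t + (-δ : ℝ) * I : ℂ) ∈ (F ∪ (fun r : ℝ => (r : ℂ)) '' Set.Icc 0 1)ᶜ := by
    rintro (h | h)
    · exact hseg (-δ) ⟨le_rfl, by linarith⟩ h
    · exact him _ (by simp [hδ0.ne']) h
  refine ⟨_, hx, _, hy, ?_⟩
  rintro ⟨γ, hγ⟩
  set σ : ℝ → ℂ := fun s => t + s * I with hσ
  have hσc : Continuous σ := by fun_prop
  set S := σ '' Set.Icc (-δ) δ with hS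
  have hSc : IsCompact S := isCompact_Icc.image hσc
  have hSp : IsPreconnected S := isPreconnected_Icc.image σ hσc.continuousOn
  have hPc : IsCompact (Set.range γ) := isCompact_range γ.continuous
  have hPp : IsPreconnected (Set.range γ) := isPreconnected_range γ.continuous
  obtain ⟨g, hg, hg'⟩ := aux_log F (Set.range γ ∪ S) hF (hPc.union hSc).isClosed (by
    rintro z hz (⟨s, rfl⟩ | ⟨s, hs, rfl⟩)
    · exact hγ s (Or.inl hz)
    · exact hseg s hs hz) 0 1 h0 h1
  have hxP : σ δ ∈ Set.range γ := ⟨0, γ.source⟩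
  have hyP : σ (-δ) ∈ Set.range γ := ⟨1, γ.target⟩
  have hxS : σ δ ∈ S := ⟨δ, ⟨by linarith, le_rfl⟩, rfl⟩
  have hyS : σ (-δ) ∈ S := ⟨-δ, ⟨le_rfl, by linarith⟩, rfl⟩
  -- slit plane facts
  have slit1 : ∀ z ∈ Set.range γ, z - 1 ≠ 0 ∧ -(z / (1 - z)) ∈ slitPlane := by
    rintro _ ⟨s, rfl⟩
    set z := γ s
    have hz : z ∉ (fun r : ℝ => (r : ℂ)) '' Set.Icc 0 1 := fun h => hγ s (Or.inr h)
    have hz1 : z - 1 ≠ 0 := by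
      intro h
      exact hz ⟨1, by simp, by simp; linear_combination -h⟩
    have hz1' : 1 - z ≠ 0 := by
      intro h
      exact hz1 (by linear_combination -h)
    refine ⟨hz1, ?_⟩
    by_contra hn
    rw [mem_slitPlane_iff] at hn
    push Not at hn
    obtain ⟨hre, him'⟩ := hn
    set w := -(z / (1 - z)) with hw
    set r := w.re with hr
    have hwr : w = (r : ℂ) := Complex.ext (by simp [hr]) (by simp [him'])
    have hrz : (1 - (r : ℂ)) * z = - r := by
      rw [← hwr, hw]
      field_simp
      ring
    have h1r : 0 < 1 - r := by linarith
    have h1r' : (1 - (r : ℂ)) ≠ 0 := by exact_mod_cast h1r.ne'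
    refine hz ⟨-r / (1 - r), ⟨by apply div_nonneg <;> linarith, ?_⟩, ?_⟩
    · rw [div_le_one h1r]; linarith
    · push_cast
      rw [div_eq_iff h1r', ← hrz]; ring
  have hform : ∀ s : ℝ, 1 - σ s ≠ 0 ∧ (σ s / (1 - σ s)).im = s / ((1 - t) ^ 2 + s ^ 2) ∧
      (σ s / (1 - σ s)).re = (t * (1 - t) - s ^ 2) / ((1 - t) ^ 2 + s ^ 2) := by
    intro s
    have hne : 1 - σ s ≠ 0 := by
      intro h
      have := congrArg Complex.re h
      simp [hσ] at this
      linarith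
    have hp : 0 < (1 - t) ^ 2 + s ^ 2 := by
      have : 0 < 1 - t := by linarith
      positivity
    have hp' : (((1 - t) ^ 2 + s ^ 2 : ℝ) : ℂ) ≠ 0 := by exact_mod_cast hp.ne'
    have e : σ s / (1 - σ s) = ((t * (1 - t) - s ^ 2) / ((1 - t) ^ 2 + s ^ 2) : ℝ) +
        (s / ((1 - t) ^ 2 + s ^ 2) : ℝ) * I := by
      rw [div_eq_iff hne]
      push_cast at hp' ⊢
      simp only [hσ]
      field_simp
      ring_nf
      simp only [I_sq]
      ring
    refine ⟨hne, ?_, ?_⟩ <;> rw [e] <;> simp only [add_re, add_im, ofReal_re, ofReal_im, re_ofReal_mul, im_ofReal_mul, I_re, I_im] <;> ring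
  have slit2 : ∀ z ∈ S, 1 - z ≠ 0 ∧ z / (1 - z) ∈ slitPlane := by
    rintro _ ⟨s, -, rfl⟩
    obtain ⟨h1, h2, h3⟩ := hform s
    refine ⟨h1, ?_⟩
    rw [mem_slitPlane_iff, h2, h3]
    have : 0 < 1 - t := by linarith
    by_cases hs : s = 0
    · left
      subst hs
      simp only [ne_eq, OfNat.ofNat_ne_zero, not_false_eq_true, zero_pow, sub_zero, add_zero]
      positivity
    · right
      have : 0 < (1 - t) ^ 2 + s ^ 2 := by positivity
      exact div_ne_zero hs this.ne'
  have eP := aux_const hPp (fun z => g z - log (-(z / (1 - z)))) (by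
    apply (hg.mono Set.subset_union_left).sub
    apply ContinuousOn.clog
    · apply ContinuousOn.neg
      apply ContinuousOn.div (by fun_prop) (by fun_prop)
      intro z hz h
      exact (slit1 z hz).1 (by linear_combination -h)
    · exact fun z hz => (slit1 z hz).2) (by
    intro z hz
    obtain ⟨h1, h2⟩ := slit1 z hz
    have h3 := slitPlane_ne_zero h2
    have h4 := hg' z (Or.inl hz)
    have h5 : 1 - z ≠ 0 := fun h => h1 (by linear_combination -h)
    simp only [exp_sub, exp_log h3]
    rw [div_eq_one_iff_eq h3, ← neg_div, eq_div_iff h5]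
    linear_combination -h4) hxP hyP
  have eS := aux_const hSp (fun z => g z - log (z / (1 - z)) - Real.pi * I) (by
    refine ContinuousOn.sub ?_ continuousOn_const
    apply (hg.mono Set.subset_union_right).sub
    apply ContinuousOn.clog
    · apply ContinuousOn.div (by fun_prop) (by fun_prop)
      exact fun z hz => (slit2 z hz).1
    · exact fun z hz => (slit2 z hz).2) (by
    intro z hz
    obtain ⟨h5, h2⟩ := slit2 z hz
    have h3 := slitPlane_ne_zero h2
    have h4 := hg' z (Or.inr hz)
    simp only [exp_sub, exp_log h3, exp_pi_mul_I]
    have h6 : exp (g z) = - (z / (1 - z)) := by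
      rw [← neg_div, eq_div_iff h5]
      linear_combination -h4
    rw [h6, neg_div, div_self h3]
    simp) hxS hyS
  have hq : 0 < (1 - t) ^ 2 + δ ^ 2 := by positivity
  have ix : 0 < (σ δ / (1 - σ δ)).im := by
    rw [(hform δ).2.1]; positivity
  have iy : (σ (-δ) / (1 - σ (-δ))).im < 0 := by
    rw [(hform (-δ)).2.1, neg_sq]
    exact div_neg_of_neg_of_pos (by linarith) hq
  have e1 := congrArg Complex.im eP
  have e2 := congrArg Complex.im eS
  simp only [sub_im, log_im, arg_neg_eq_arg_sub_pi_of_im_pos ix,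
    arg_neg_eq_arg_add_pi_of_im_neg iy] at e1 e2
  have := Real.pi_pos
  linarith

lemma aux_preconn (R : ℝ) (hR : 0 ≤ R) :
    IsPreconnected (Metric.closedBall (0 : EuclideanSpace ℝ (Fin 2)) R)ᶜ := by
  have hr : 1 < Module.rank ℝ (EuclideanSpace ℝ (Fin 2)) := by
    rw [← Module.finrank_eq_rank]; simp
  have hs : IsPreconnected (Metric.sphere (0 : EuclideanSpace ℝ (Fin 2)) 1) :=
    isPreconnected_sphere hr 0 1
  have := ((isPreconnected_Ioi (a := R)).prod hs).image
    (fun p : ℝ × EuclideanSpace ℝ (Fin 2) => p.1 • p.2) (by fun_prop)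
  convert this using 1
  ext x
  simp only [Set.mem_compl_iff, Metric.mem_closedBall, dist_zero_right, not_le, Set.mem_image,
    Set.mem_prod, Set.mem_Ioi, mem_sphere_zero_iff_norm, Prod.exists]
  constructor
  · intro h
    have hx : ‖x‖ ≠ 0 := by linarith
    refine ⟨‖x‖, ‖x‖⁻¹ • x, ⟨h, ?_⟩, ?_⟩
    · rw [norm_smul]; simp [hx]
    · rw [smul_smul, mul_inv_cancel₀ hx, one_smul]
  · rintro ⟨r, y, ⟨hr, hy⟩, rfl⟩
    rw [norm_smul, hy, mul_one]
    exact hr.trans_le (le_abs_self r)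

lemma aux_bdd (A : Set (EuclideanSpace ℝ (Fin 2))) (hA : IsCompact A)
    {x y : EuclideanSpace ℝ (Fin 2)} (hx : x ∈ Aᶜ) (hy : y ∈ Aᶜ) (hxy : ¬ JoinedIn Aᶜ x y) :
    ∃ x ∈ Aᶜ, Bornology.IsBounded (connectedComponentIn Aᶜ x) := by
  by_contra! hcon
  obtain ⟨R, hR0, hR⟩ := hA.isBounded.subset_closedBall_lt 0 0
  have hV := aux_preconn R hR0.le
  have hVA : (Metric.closedBall (0 : EuclideanSpace ℝ (Fin 2)) R)ᶜ ⊆ Aᶜ :=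
    Set.compl_subset_compl.2 hR
  have meet : ∀ z ∈ Aᶜ, ∃ p ∈ connectedComponentIn Aᶜ z,
      p ∈ (Metric.closedBall (0 : EuclideanSpace ℝ (Fin 2)) R)ᶜ := by
    intro z hz
    by_contra! h
    exact hcon z hz (Metric.isBounded_closedBall.subset fun p hp => not_not.1 (h p hp))
  obtain ⟨p, hp, hpV⟩ := meet x hx
  obtain ⟨q, hq, hqV⟩ := meet y hy
  have h1 := hV.subset_connectedComponentIn hpV hVA hqV
  have h2 : connectedComponentIn Aᶜ x = connectedComponentIn Aᶜ y := by
    rw [connectedComponentIn_eq hp, connectedComponentIn_eq h1, connectedComponentIn_eq hq]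
  have h3 : y ∈ connectedComponentIn Aᶜ x := h2 ▸ mem_connectedComponentIn hy
  have ho : IsOpen (connectedComponentIn Aᶜ x) := hA.isClosed.isOpen_compl.connectedComponentIn
  have hc : IsConnected (connectedComponentIn Aᶜ x) := isConnected_connectedComponentIn_iff.2 hx
  have hpc := (ho.isConnected_iff_isPathConnected).1 hc
  exact hxy ((hpc.joinedIn x (mem_connectedComponentIn hx) y h3).mono
    (connectedComponentIn_subset _ _))

/-- Let `F` be a compact connected subset of `ℝ²` with empty interior which is not
contained in any affine line. Then there exists a compact set `K ⊂ ℝ²` contained in an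
affine line such that `(F ∪ K)ᶜ` has at least one bounded connected component. -/
theorem exists_compact_in_line_bounded_component
    (F : Set (EuclideanSpace ℝ (Fin 2)))
    (hFcpt : IsCompact F) (hFconn : IsConnected F) (hFint : interior F = ∅)
    (hFline : ¬ ∃ (φ : EuclideanSpace ℝ (Fin 2) →ₗ[ℝ] ℝ) (c : ℝ),
      φ ≠ 0 ∧ ∀ x ∈ F, φ x = c) :
    ∃ K : Set (EuclideanSpace ℝ (Fin 2)), IsCompact K ∧
      (∃ (φ : EuclideanSpace ℝ (Fin 2) →ₗ[ℝ] ℝ) (c : ℝ), φ ≠ 0 ∧ ∀ x ∈ K, φ x = c) ∧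
      ∃ x ∈ (F ∪ K)ᶜ, Bornology.IsBounded (connectedComponentIn (F ∪ K)ᶜ x) := by
  have hnc : ¬ Convex ℝ F := by
    intro hc
    have h1 : affineSpan ℝ F ≠ ⊤ := by
      rw [Ne, ← hc.interior_nonempty_iff_affineSpan_eq_top, hFint]
      simp
    obtain ⟨a, ha⟩ := hFconn.nonempty
    have h2 : (affineSpan ℝ F).direction ≠ ⊤ := fun h => h1
      ((AffineSubspace.direction_eq_top_iff_of_nonempty ⟨a, subset_affineSpan ℝ F ha⟩).1 h)
    obtain ⟨φ, hφ, hle⟩ := Submodule.exists_le_ker_of_lt_top _ (lt_top_iff_ne_top.2 h2)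
    refine hFline ⟨φ, φ a, hφ, fun x hx => ?_⟩
    have := hle (AffineSubspace.vsub_mem_direction (subset_affineSpan ℝ F hx)
      (subset_affineSpan ℝ F ha))
    simpa [sub_eq_zero] using this
  rw [convex_iff_segment_subset] at hnc
  push Not at hnc
  obtain ⟨a, ha, b, hb, hab⟩ := hnc
  obtain ⟨c, hc, hcF⟩ := Set.not_subset.1 hab
  have hne : b - a ≠ 0 := by
    intro h
    rw [sub_eq_zero] at h
    subst h
    simp at hc
    exact hcF (hc ▸ ha)
  rw [segment_eq_image'] at hc
  obtain ⟨t, ht, rfl⟩ := hc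
  have hKc : IsCompact (segment ℝ a b) := by
    rw [segment_eq_image']
    exact isCompact_Icc.image (by fun_prop)
  refine ⟨segment ℝ a b, hKc, ?_, ?_⟩
  · have hlt : Submodule.span ℝ {b - a} < ⊤ := by
      rw [lt_top_iff_ne_top]
      intro h
      have h1 := finrank_span_singleton (K := ℝ) hne
      rw [h, finrank_top] at h1
      simp at h1
    obtain ⟨φ, hφ, hle⟩ := Submodule.exists_le_ker_of_lt_top _ hlt
    have h0 : φ (b - a) = 0 := hle (Submodule.mem_span_singleton_self _)
    refine ⟨φ, φ a, hφ, fun x hx => ?_⟩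
    rw [segment_eq_image'] at hx
    obtain ⟨s, -, rfl⟩ := hx
    simp only [map_add, map_smul, h0, smul_zero, add_zero]
  · let T : ℂ ≃ₗᵢ[ℝ] EuclideanSpace ℝ (Fin 2) := Complex.orthonormalBasisOneI.repr
    set u := T.symm (b - a) with hu
    have hu0 : u ≠ 0 := by
      intro h
      exact hne (by rw [← T.apply_symm_apply (b - a), ← hu, h, map_zero])
    -- the inverse parametrisation
    let ψ : ℂ → EuclideanSpace ℝ (Fin 2) := fun z => a + T (z * u)
    let f : EuclideanSpace ℝ (Fin 2) → ℂ := fun x => T.symm (x - a) / u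
    have hψc : Continuous ψ := by
      exact continuous_const.add (T.continuous.comp (by fun_prop))
    have hfc : Continuous f := by
      exact (T.symm.continuous.comp (by fun_prop)).div_const _
    have hfψ : ∀ z, f (ψ z) = z := by
      intro z
      simp [f, ψ, hu0]
    have hψf : ∀ x, ψ (f x) = x := by
      intro x
      simp [f, ψ, hu0]
    have hψr : ∀ r : ℝ, ψ r = a + r • (b - a) := by
      intro r
      simp only [ψ, ← Complex.real_smul, map_smul, hu, T.apply_symm_apply]
    have hψ0 : ψ 0 = a := by simp [ψ]
    have hψ1 : ψ 1 = b := by simpa using hψr 1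
    have himg : ∀ z, z ∈ f '' F ↔ ψ z ∈ F := by
      intro z
      constructor
      · rintro ⟨x, hx, rfl⟩; rwa [hψf]
      · intro h; exact ⟨_, h, hfψ z⟩
    have hset : ∀ z, z ∈ (f '' F ∪ (fun r : ℝ => (r : ℂ)) '' Set.Icc 0 1)ᶜ ↔
        ψ z ∈ (F ∪ segment ℝ a b)ᶜ := by
      intro z
      simp only [Set.mem_compl_iff, Set.mem_union, himg]
      have : z ∈ (fun r : ℝ => (r : ℂ)) '' Set.Icc 0 1 ↔ ψ z ∈ segment ℝ a b := by
        rw [segment_eq_image']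
        constructor
        · rintro ⟨r, hr, rfl⟩
          exact ⟨r, hr, (hψr r).symm⟩
        · rintro ⟨r, hr, h⟩
          refine ⟨r, hr, ?_⟩
          have h' : ψ r = ψ z := (hψr r).trans h
          have h2 := congrArg f h'
          rwa [hfψ, hfψ] at h2
      rw [this]
    obtain ⟨x, hx, y, hy, hxy⟩ := aux_not_joined (f '' F)
      (hFconn.isPreconnected.image f hfc.continuousOn) (hFcpt.image hfc).isClosed
      ((himg 0).2 (hψ0 ▸ ha)) ((himg 1).2 (hψ1 ▸ hb)) t ht.1 ht.2
      (fun h => hcF (by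
        have h2 := (himg t).1 h
        rwa [hψr t] at h2))
    refine aux_bdd _ (hFcpt.union hKc) ((hset x).1 hx) ((hset y).1 hy) ?_
    rintro ⟨γ, hγ⟩
    refine hxy ?_
    have : JoinedIn (f '' F ∪ (fun r : ℝ => (r : ℂ)) '' Set.Icc 0 1)ᶜ (f (ψ x)) (f (ψ y)) :=
      ⟨γ.map hfc, fun s => by
        rw [hset]
        simpa [hψf] using hγ s⟩
    rwa [hfψ, hfψ] at this
end
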